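/- There exists N such that for all n ≥ N, the maximum, over all sets X of n points in Euclidean 4-space with all pairwise distances at most 1, of the number of 3-element subsets of X with all three pairwise distances equal to 1, equals F₃(n), where F₃(n) = (n−1)²/4 + n if n ≡ 1 (mod 4), F₃(n) = (n−1)²/4 + n − 1 if n ≡ 3 (mod 4), and F₃(n) = n(n−2)/4 + n if n is even. That is, every such X contains at most F₃(n) unit triangles, and some such X attains exactly F₃(n) unit triangles. -/

import Mathlib

attribute [local instance] Classical.propDecidable

/-- The set of 3-element subsets of `X` with all three pairwise distances equal to `1`
(unit triangles). -/
noncomputable def unitTriangles (X : Finset (EuclideanSpace ℝ (Fin 4))) :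
    Finset (Finset (EuclideanSpace ℝ (Fin 4))) :=
  (X.powersetCard 3).filter (fun s => ∀ x ∈ s, ∀ y ∈ s, x ≠ y → ‖x - y‖ = 1)

/-- The extremal number of unit triangles in an `n`-point set of diameter 1 in `ℝ⁴`. -/
def F₃ (n : ℕ) : ℕ :=
  if n % 4 = 1 then (n - 1) ^ 2 / 4 + n
  else if n % 4 = 3 then (n - 1) ^ 2 / 4 + n - 1
  else n * (n - 2) / 4 + n

/-!
Two circles in orthogonal planes with a common center and squared radii `ρ + σ = 1` have all cross
distances equal to `1`. Put `a` points on the circle with `ρ ≥ 1 / 2` and `b` on the other, keeping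
the diameter at most `1`. Seen from a unit chord, all points of its circle lie on the arc it cuts
off or opposite to it. On the first circle, where unit chords subtend at most a right angle, only
the arc is left, so there is at most one unit chord. On the second there are at most `b`, with
equality only for odd `b`, as every unit chord meets the given one; a regular `b`-gon attains it.
Apart from at most one exception, a triangle consists of a unit chord of one circle and a point of
the other, and `F₃ n` is the maximum of `(a + 1) * b` over `a + b = n` with `b` odd.

For large `n` nothing does better. The unit neighbors of a point lie on a `3`-sphere, where a set of
diameter `1` has only linearly many unit distances: in the frame `q, iq, jq, kq` attached to each
point `q`, all but boundedly many neighbors of a point `p` are such that `p` is the extreme one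
among their own neighbors, with respect to the rotation about one of the axes. Hence more than
`n ^ 2 / 4` triangles force a number of unit distances that by the Kővári–Sós–Turán inequality
yields a large `K_{3, s}`, hence a large subset on two such circles. A point outside of a maximal
such subset has at most four unit neighbors in it, far fewer than a point of it has, so it
contributes too few triangles for a set exceeding `F₃ n`.
-/

open Finset Module
open scoped RealInnerProductSpace

local notation "ℝ⁴" => EuclideanSpace ℝ (Fin 4)

section UnitDistanceGraph

variable {E : Type*} [NormedAddCommGroup E] {X Y s : Finset E} {x y z : E}

/-- The neighbors in `X` of the point `z`, in the graph joining points at distance `1`. -/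
noncomputable def unitNeighbors (X : Finset E) (z : E) : Finset E := {y ∈ X | ‖y - z‖ = 1}

/-- The edges of the unit distance graph of `X`, encoded like `unitTriangles` as subsets of `X`. -/
noncomputable def unitPairs (X : Finset E) : Finset (Finset E) :=
  {s ∈ X.powersetCard 2 | ∀ x ∈ s, ∀ y ∈ s, x ≠ y → ‖x - y‖ = 1}

/-- The point set `X` has diameter at most `1`, in the form used by the theorem. -/
def DiamLEOne (X : Finset E) : Prop := ∀ x ∈ X, ∀ y ∈ X, ‖x - y‖ ≤ 1

lemma DiamLEOne.mono (hX : DiamLEOne X) (hYX : Y ⊆ X) : DiamLEOne Y :=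
  fun x hx y hy => hX x (hYX hx) y (hYX hy)

lemma ne_of_norm_sub_eq_one (h : ‖x - y‖ = 1) : x ≠ y := by
  rintro rfl
  simp at h

lemma mem_unitNeighbors : y ∈ unitNeighbors X z ↔ y ∈ X ∧ ‖y - z‖ = 1 := by
  simp [unitNeighbors]

lemma unitNeighbors_subset : unitNeighbors X z ⊆ X := filter_subset _ _

lemma mem_unitNeighbors_comm (hy : y ∈ X) (hz : z ∈ X) :
    y ∈ unitNeighbors X z ↔ z ∈ unitNeighbors X y := by
  simp [mem_unitNeighbors, hy, hz, norm_sub_rev]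

lemma sum_card_unitNeighbors_comm (A B : Finset E) :
    ∑ a ∈ A, #(unitNeighbors B a) = ∑ b ∈ B, #(unitNeighbors A b) := by
  simpa [unitNeighbors, bipartiteAbove, bipartiteBelow, norm_sub_rev]
    using sum_card_bipartiteAbove_eq_sum_card_bipartiteBelow (s := A) (t := B)
      fun a b => ‖b - a‖ = 1

lemma subset_of_mem_unitPairs (hs : s ∈ unitPairs X) : s ⊆ X :=
  (mem_powersetCard.1 (mem_of_mem_filter _ hs)).1

lemma card_of_mem_unitPairs (hs : s ∈ unitPairs X) : #s = 2 :=
  (mem_powersetCard.1 (mem_of_mem_filter _ hs)).2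

lemma unitPairs_mono (h : Y ⊆ X) : unitPairs Y ⊆ unitPairs X :=
  filter_subset_filter _ (powersetCard_mono h)

lemma card_unitPairs_le_choose : #(unitPairs X) ≤ (#X).choose 2 :=
  (card_filter_le _ _).trans_eq (card_powersetCard 2 X)

lemma mem_unitPairs [DecidableEq E] :
    s ∈ unitPairs X ↔ ∃ x ∈ X, ∃ y ∈ X, ‖x - y‖ = 1 ∧ s = {x, y} := by
  simp only [unitPairs, mem_filter, mem_powersetCard]
  constructor
  · rintro ⟨⟨hs, hcard⟩, h⟩
    obtain ⟨x, y, hxy, rfl⟩ := card_eq_two.1 hcard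
    exact ⟨x, hs (by simp), y, hs (by simp), h x (by simp) y (by simp) hxy, rfl⟩
  · rintro ⟨x, hx, y, hy, h, rfl⟩
    refine ⟨⟨by simp [insert_subset_iff, hx, hy], card_pair (ne_of_norm_sub_eq_one h)⟩, ?_⟩
    simp [h, norm_sub_rev y x]

lemma pair_mem_unitPairs [DecidableEq E] (hx : x ∈ X) (hy : y ∈ X) (h : ‖x - y‖ = 1) :
    {x, y} ∈ unitPairs X :=
  mem_unitPairs.2 ⟨x, hx, y, hy, h, rfl⟩

lemma card_filter_mem_unitPairs (hx : x ∈ X) :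
    #{s ∈ unitPairs X | x ∈ s} = #(unitNeighbors X x) := by
  symm
  refine card_bij (fun y _ => {x, y}) (fun y hy => ?_) (fun y hy z _ h => ?_) (fun s hs => ?_)
  · obtain ⟨hyX, hyx⟩ := mem_unitNeighbors.1 hy
    exact mem_filter.2 ⟨pair_mem_unitPairs hx hyX (by rwa [norm_sub_rev]), by simp⟩
  · have hyz : y ∈ ({x, z} : Finset E) := h ▸ by simp
    simpa [ne_of_norm_sub_eq_one (mem_unitNeighbors.1 hy).2] using hyz
  · obtain ⟨hs, hxs⟩ := mem_filter.1 hs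
    obtain ⟨a, ha, b, hb, hab, rfl⟩ := mem_unitPairs.1 hs
    rcases mem_insert.1 hxs with rfl | hxb
    · exact ⟨b, mem_unitNeighbors.2 ⟨hb, by rwa [norm_sub_rev]⟩, rfl⟩
    · obtain rfl := mem_singleton.1 hxb
      exact ⟨a, mem_unitNeighbors.2 ⟨ha, hab⟩, pair_comm _ _⟩

lemma sum_card_unitNeighbors (X : Finset E) :
    ∑ x ∈ X, #(unitNeighbors X x) = 2 * #(unitPairs X) := by
  calc ∑ x ∈ X, #(unitNeighbors X x)
      = ∑ x ∈ X, #{s ∈ unitPairs X | x ∈ s} :=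
        sum_congr rfl fun x hx => (card_filter_mem_unitPairs hx).symm
    _ = ∑ s ∈ unitPairs X, #{x ∈ X | x ∈ s} :=
        sum_card_bipartiteAbove_eq_sum_card_bipartiteBelow _
    _ = ∑ s ∈ unitPairs X, 2 := sum_congr rfl fun s hs => by
        rw [filter_mem_eq_inter, inter_eq_right.2 (subset_of_mem_unitPairs hs),
          card_of_mem_unitPairs hs]
    _ = 2 * #(unitPairs X) := by rw [sum_const, smul_eq_mul, mul_comm]

end UnitDistanceGraph

section UnitTriangles

variable {X A B : Finset ℝ⁴} {s : Finset ℝ⁴}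

lemma mem_unitTriangles :
    s ∈ unitTriangles X ↔ ∃ x ∈ X, ∃ y ∈ X, ∃ z ∈ X,
      ‖x - y‖ = 1 ∧ ‖x - z‖ = 1 ∧ ‖y - z‖ = 1 ∧ s = {x, y, z} := by
  simp only [unitTriangles, mem_filter, mem_powersetCard]
  constructor
  · rintro ⟨⟨hs, hcard⟩, h⟩
    obtain ⟨x, y, z, hxy, hxz, hyz, rfl⟩ := card_eq_three.1 hcard
    exact ⟨x, hs (by simp), y, hs (by simp), z, hs (by simp), h x (by simp) y (by simp) hxy,
      h x (by simp) z (by simp) hxz, h y (by simp) z (by simp) hyz, rfl⟩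
  · rintro ⟨x, hx, y, hy, z, hz, hxy, hxz, hyz, rfl⟩
    have hcard : #{x, y, z} = 3 := card_eq_three.2 ⟨x, y, z, ne_of_norm_sub_eq_one hxy,
      ne_of_norm_sub_eq_one hxz, ne_of_norm_sub_eq_one hyz, rfl⟩
    refine ⟨⟨by simp [insert_subset_iff, hx, hy, hz], hcard⟩, ?_⟩
    simp [hxy, hxz, hyz, norm_sub_rev y x, norm_sub_rev z x, norm_sub_rev z y]

lemma card_of_mem_unitTriangles (hs : s ∈ unitTriangles X) : #s = 3 :=
  (mem_powersetCard.1 (mem_of_mem_filter _ hs)).2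

lemma card_unitTriangles_le_choose : #(unitTriangles X) ≤ (#X).choose 3 :=
  (card_filter_le _ _).trans_eq (card_powersetCard 3 X)

lemma insert_pair_mem_biUnion {x y z : ℝ⁴} (hx : x ∈ A) (hy : y ∈ B) (hz : z ∈ B)
    (hxy : ‖x - y‖ = 1) (hxz : ‖x - z‖ = 1) (hyz : ‖y - z‖ = 1) :
    {x, y, z} ∈ A.biUnion fun a => (unitPairs (unitNeighbors B a)).image (insert a) :=
  mem_biUnion.2 ⟨x, hx, mem_image.2 ⟨{y, z}, pair_mem_unitPairs
    (mem_unitNeighbors.2 ⟨hy, by rwa [norm_sub_rev]⟩)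
    (mem_unitNeighbors.2 ⟨hz, by rwa [norm_sub_rev]⟩) hyz, rfl⟩⟩

lemma card_biUnion_insert_unitPairs_le :
    #(A.biUnion fun a => (unitPairs (unitNeighbors B a)).image (insert a)) ≤
      ∑ a ∈ A, #(unitPairs (unitNeighbors B a)) :=
  card_biUnion_le.trans (sum_le_sum fun _ _ => card_image_le)

lemma card_unitTriangles_le_sum :
    #(unitTriangles X) ≤ ∑ x ∈ X, #(unitPairs (unitNeighbors X x)) := by
  refine (card_le_card fun s hs => ?_).trans card_biUnion_insert_unitPairs_le
  obtain ⟨x, hx, y, hy, z, hz, hxy, hxz, hyz, rfl⟩ := mem_unitTriangles.1 hs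
  exact insert_pair_mem_biUnion hx hy hz hxy hxz hyz

lemma unitTriangles_union_subset :
    unitTriangles (A ∪ B) ⊆ unitTriangles A ∪ unitTriangles B ∪
      ((A.biUnion fun a => (unitPairs (unitNeighbors B a)).image (insert a)) ∪
        B.biUnion fun b => (unitPairs (unitNeighbors A b)).image (insert b)) := by
  let F (A B : Finset ℝ⁴) := A.biUnion fun a => (unitPairs (unitNeighbors B a)).image (insert a)
  intro s hs
  obtain ⟨x, hx, y, hy, z, hz, hxy, hxz, hyz, rfl⟩ := mem_unitTriangles.1 hs
  have hyx : ‖y - x‖ = 1 := by rwa [norm_sub_rev]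
  have hzx : ‖z - x‖ = 1 := by rwa [norm_sub_rev]
  have hzy : ‖z - y‖ = 1 := by rwa [norm_sub_rev]
  have hside {A : Finset ℝ⁴} (hx : x ∈ A) (hy : y ∈ A) (hz : z ∈ A) :
      {x, y, z} ∈ unitTriangles A :=
    mem_unitTriangles.2 ⟨x, hx, y, hy, z, hz, hxy, hxz, hyz, rfl⟩
  have hfst {A B : Finset ℝ⁴} (hx : x ∈ A) (hy : y ∈ B) (hz : z ∈ B) : {x, y, z} ∈ F A B :=
    insert_pair_mem_biUnion hx hy hz hxy hxz hyz
  have hsnd {A B : Finset ℝ⁴} (hx : x ∈ B) (hy : y ∈ A) (hz : z ∈ B) : {x, y, z} ∈ F A B := by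
    rw [insert_comm x y]
    exact insert_pair_mem_biUnion hy hx hz hyx hyz hxz
  have hthd {A B : Finset ℝ⁴} (hx : x ∈ B) (hy : y ∈ B) (hz : z ∈ A) : {x, y, z} ∈ F A B := by
    rw [pair_comm y z, insert_comm x z]
    exact insert_pair_mem_biUnion hz hx hy hzx hzy hxy
  rcases mem_union.1 hx with hx | hx <;> rcases mem_union.1 hy with hy | hy <;>
    rcases mem_union.1 hz with hz | hz
  · exact mem_union_left _ (mem_union_left _ (hside hx hy hz))
  · exact mem_union_right _ (mem_union_right _ (hthd hx hy hz))
  · exact mem_union_right _ (mem_union_right _ (hsnd hx hy hz))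
  · exact mem_union_right _ (mem_union_left _ (hfst hx hy hz))
  · exact mem_union_right _ (mem_union_right _ (hfst hx hy hz))
  · exact mem_union_right _ (mem_union_left _ (hsnd hx hy hz))
  · exact mem_union_right _ (mem_union_left _ (hthd hx hy hz))
  · exact mem_union_left _ (mem_union_right _ (hside hx hy hz))

lemma card_unitTriangles_union_le :
    #(unitTriangles (A ∪ B)) ≤ #(unitTriangles A) + #(unitTriangles B) +
      (∑ a ∈ A, #(unitPairs (unitNeighbors B a)) +
        ∑ b ∈ B, #(unitPairs (unitNeighbors A b))) := by
  refine (card_le_card unitTriangles_union_subset).trans ((card_union_le _ _).trans ?_)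
  exact add_le_add (card_union_le _ _) ((card_union_le _ _).trans
    (add_le_add card_biUnion_insert_unitPairs_le card_biUnion_insert_unitPairs_le))

lemma card_unitTriangles_union_le_mul :
    #(unitTriangles (A ∪ B)) ≤ #(unitTriangles A) + #(unitTriangles B) +
      (#A * #(unitPairs B) + #B * #(unitPairs A)) := by
  refine card_unitTriangles_union_le.trans ?_
  gcongr <;> exact sum_le_card_nsmul _ _ _ fun _ _ =>
    card_le_card (unitPairs_mono unitNeighbors_subset)

lemma card_mul_card_unitPairs_le (hAB : ∀ a ∈ A, ∀ b ∈ B, ‖a - b‖ = 1) :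
    #A * #(unitPairs B) ≤ #{t ∈ unitTriangles (A ∪ B) | #(t ∩ A) = 1} := by
  have hdisj : Disjoint A B :=
    disjoint_left.2 fun x hA hB => ne_of_norm_sub_eq_one (hAB x hA x hB) rfl
  have htrace {a : ℝ⁴} {s : Finset ℝ⁴} (ha : a ∈ A) (hs : s ∈ unitPairs B) :
      insert a s ∩ A = {a} ∧ insert a s ∩ B = s := by
    have hsB := subset_of_mem_unitPairs hs
    rw [insert_inter_of_mem ha, insert_inter_of_notMem (disjoint_left.1 hdisj ha),
      inter_eq_left.2 hsB, disjoint_iff_inter_eq_empty.1 (disjoint_of_subset_left hsB hdisj.symm)]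
    exact ⟨rfl, rfl⟩
  rw [← card_product]
  refine card_le_card_of_injOn (fun p => insert p.1 p.2) (fun p hp => ?_) (fun p hp q hq h => ?_)
  · obtain ⟨ha, hs⟩ := mem_product.1 hp
    obtain ⟨x, hx, y, hy, hxy, hpair⟩ := mem_unitPairs.1 hs
    refine mem_filter.2 ⟨mem_unitTriangles.2 ⟨p.1, mem_union_left _ ha, x, mem_union_right _ hx,
      y, mem_union_right _ hy, hAB _ ha x hx, hAB _ ha y hy, hxy, by simp [hpair]⟩, ?_⟩
    simp [htrace ha hs]
  · obtain ⟨hpA, hpB⟩ := mem_product.1 hp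
    obtain ⟨hqA, hqB⟩ := mem_product.1 hq
    dsimp only at h
    refine Prod.ext (singleton_injective ?_) ?_
    · rw [← (htrace hpA hpB).1, ← (htrace hqA hqB).1, h]
    · rw [← (htrace hpA hpB).2, ← (htrace hqA hqB).2, h]

lemma le_card_unitTriangles_union (hAB : ∀ a ∈ A, ∀ b ∈ B, ‖a - b‖ = 1) :
    #A * #(unitPairs B) + #B * #(unitPairs A) ≤ #(unitTriangles (A ∪ B)) := by
  have hdisj : Disjoint A B :=
    disjoint_left.2 fun x hA hB => ne_of_norm_sub_eq_one (hAB x hA x hB) rfl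
  have hBA : #B * #(unitPairs A) ≤ #{t ∈ unitTriangles (A ∪ B) | #(t ∩ B) = 1} := by
    rw [union_comm]
    exact card_mul_card_unitPairs_le fun b hb a ha => by rw [norm_sub_rev, hAB a ha b hb]
  refine (add_le_add (card_mul_card_unitPairs_le hAB) hBA).trans ?_
  rw [← card_union_of_disjoint]
  · exact card_le_card (union_subset (filter_subset _ _) (filter_subset _ _))
  · refine disjoint_filter.2 fun t ht hA hB => ?_
    have hsub : t ⊆ A ∪ B := (mem_powersetCard.1 (mem_of_mem_filter _ ht)).1
    have : #(t ∩ A) + #(t ∩ B) = 3 := by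
      rw [← card_union_of_disjoint (hdisj.mono inter_subset_right inter_subset_right),
        ← inter_union_distrib_left, inter_eq_left.2 hsub, card_of_mem_unitTriangles ht]
    omega

end UnitTriangles

section KovariSosTuran

variable {α β : Type*} (r : α → β → Prop) (s : Finset α) (t : Finset β) {m : ℕ}

lemma sum_card_bipartiteAbove_pow_three :
    ∑ a ∈ s, #(t.bipartiteAbove r a) ^ 3 =
      ∑ b₁ ∈ t, ∑ b₂ ∈ t, ∑ b₃ ∈ t, #{a ∈ s | r a b₁ ∧ r a b₂ ∧ r a b₃} := by
  let r₃ (a : α) (b : β × β × β) : Prop := r a b.1 ∧ r a b.2.1 ∧ r a b.2.2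
  have hcube (a : α) : (t ×ˢ t ×ˢ t).bipartiteAbove r₃ a =
      t.bipartiteAbove r a ×ˢ t.bipartiteAbove r a ×ˢ t.bipartiteAbove r a := by
    ext ⟨b₁, b₂, b₃⟩
    simp only [mem_bipartiteAbove, mem_product, r₃]
    tauto
  calc ∑ a ∈ s, #(t.bipartiteAbove r a) ^ 3
      = ∑ a ∈ s, #((t ×ˢ t ×ˢ t).bipartiteAbove r₃ a) :=
        sum_congr rfl fun a _ => by rw [hcube, card_product, card_product]; ring
    _ = ∑ b ∈ t ×ˢ t ×ˢ t, #(s.bipartiteBelow r₃ b) :=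
        sum_card_bipartiteAbove_eq_sum_card_bipartiteBelow _
    _ = _ := by
        simp_rw [sum_product]
        rfl

variable {r s t}

/-- The **Kővári–Sós–Turán inequality** for graphs without a `K_{3, m + 1}`. -/
lemma sum_card_bipartiteAbove_pow_three_le
    (h : ∀ b₁ ∈ t, ∀ b₂ ∈ t, ∀ b₃ ∈ t, b₁ ≠ b₂ → b₁ ≠ b₃ → b₂ ≠ b₃ →
      #{a ∈ s | r a b₁ ∧ r a b₂ ∧ r a b₃} ≤ m) :
    (∑ a ∈ s, #(t.bipartiteAbove r a)) ^ 3 ≤ #s ^ 2 * (m * #t ^ 3 + 3 * #s * #t ^ 2) := by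
  have hcommon : ∀ b₁ ∈ t, ∀ b₂ ∈ t, ∀ b₃ ∈ t, #{a ∈ s | r a b₁ ∧ r a b₂ ∧ r a b₃} ≤
      m + (if b₁ = b₂ then #s else 0) + (if b₁ = b₃ then #s else 0) +
        (if b₂ = b₃ then #s else 0) := by
    intro b₁ h₁ b₂ h₂ b₃ h₃
    have htrivial : #{a ∈ s | r a b₁ ∧ r a b₂ ∧ r a b₃} ≤ #s := card_filter_le _ _
    have := h b₁ h₁ b₂ h₂ b₃ h₃
    split_ifs <;> first | omega | simp_all
  calc (∑ a ∈ s, #(t.bipartiteAbove r a)) ^ 3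
      ≤ #s ^ 2 * ∑ a ∈ s, #(t.bipartiteAbove r a) ^ 3 :=
        pow_sum_le_card_mul_sum_pow (fun _ _ => Nat.zero_le _) 2
    _ ≤ #s ^ 2 * ∑ b₁ ∈ t, ∑ b₂ ∈ t, ∑ b₃ ∈ t, (m + (if b₁ = b₂ then #s else 0) +
          (if b₁ = b₃ then #s else 0) + (if b₂ = b₃ then #s else 0)) := by
        rw [sum_card_bipartiteAbove_pow_three]
        gcongr with b₁ h₁ b₂ h₂ b₃ h₃
        exact hcommon b₁ h₁ b₂ h₂ b₃ h₃
    _ = #s ^ 2 * (m * #t ^ 3 + 3 * #s * #t ^ 2) := by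
        have hdiag : ∑ b₁ ∈ t, ∑ b₂ ∈ t, (if b₁ = b₂ then #s else 0) = #t * #s := by simp
        simp only [sum_add_distrib, sum_const, smul_eq_mul, ← mul_sum, hdiag]
        ring

end KovariSosTuran

section QuaternionFrame

/-- The product of the `u`-th imaginary quaternion unit with `q`, in coordinates. For `‖q‖ = 1` the
vectors `q`, `imagMul 0 q`, `imagMul 1 q`, `imagMul 2 q` form an orthonormal basis of `ℝ⁴`. -/
noncomputable def imagMul (u : Fin 3) (q : ℝ⁴) : ℝ⁴ :=
  match u with
  | 0 => !₂[-q 1, q 0, -q 3, q 2]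
  | 1 => !₂[-q 2, q 3, q 0, -q 1]
  | 2 => !₂[-q 3, -q 2, q 1, q 0]

/-- Twice the signed area of the triangle spanned by `0` and the projections of `p`, `p'` to the
plane of `imagMul (u + 1) q` and `imagMul (u + 2) q`. -/
noncomputable def turn (u : Fin 3) (q p p' : ℝ⁴) : ℝ :=
  ⟪imagMul (u + 1) q, p⟫ * ⟪imagMul (u + 2) q, p'⟫ -
    ⟪imagMul (u + 2) q, p⟫ * ⟪imagMul (u + 1) q, p'⟫

/-- The `imagMul u q`-coordinate of `r`, corrected by a multiple of that of `p` so that it pairs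
with `turn` in `turn_mul_turn_add_axialDefect_mul`. -/
noncomputable def axialDefect (u : Fin 3) (q p r : ℝ⁴) : ℝ :=
  ⟪imagMul u q, r⟫ - 2 / 3 * ⟪imagMul u q, p⟫ * (1 - ⟪q, r⟫)

/-- The direction `imagMul u q` carries at least a third of the component of the unit vector `r`
orthogonal to the unit vector `q`. -/
def IsAligned (u : Fin 3) (q r : ℝ⁴) : Prop := (1 - ⟪q, r⟫ ^ 2) / 3 ≤ ⟪imagMul u q, r⟫ ^ 2

variable {u : Fin 3} {p p' q r : ℝ⁴}

lemma inner_eq_sum_four (x y : ℝ⁴) :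
    ⟪x, y⟫ = x 0 * y 0 + x 1 * y 1 + x 2 * y 2 + x 3 * y 3 := by
  simp only [PiLp.inner_apply, RCLike.inner_apply, conj_trivial, Fin.sum_univ_four]
  ring

lemma inner_imagMul_left (u : Fin 3) (x y : ℝ⁴) : ⟪imagMul u x, y⟫ = -⟪imagMul u y, x⟫ := by
  fin_cases u <;> simp [inner_eq_sum_four, imagMul] <;> ring

lemma inner_eq_inner_mul_inner_add_imagMul (hq : ‖q‖ = 1) (u : Fin 3) (x y : ℝ⁴) :
    ⟪x, y⟫ = ⟪q, x⟫ * ⟪q, y⟫ + ⟪imagMul u q, x⟫ * ⟪imagMul u q, y⟫ +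
      ⟪imagMul (u + 1) q, x⟫ * ⟪imagMul (u + 1) q, y⟫ +
      ⟪imagMul (u + 2) q, x⟫ * ⟪imagMul (u + 2) q, y⟫ := by
  have hq' : q 0 * q 0 + q 1 * q 1 + q 2 * q 2 + q 3 * q 3 = 1 := by
    rw [← inner_eq_sum_four, real_inner_self_eq_norm_sq, hq, one_pow]
  rw [← one_mul ⟪x, y⟫, ← hq']
  fin_cases u <;> simp [inner_eq_sum_four, imagMul] <;> ring

lemma turn_comm (u : Fin 3) (q p p' : ℝ⁴) : turn u q p p' = -turn u q p' p := by
  unfold turn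
  ring

lemma IsAligned.symm (h : IsAligned u q r) : IsAligned u r q := by
  unfold IsAligned at *
  rwa [inner_imagMul_left, neg_sq, real_inner_comm]

lemma exists_isAligned (hq : ‖q‖ = 1) (hr : ‖r‖ = 1) : ∃ u, IsAligned u q r := by
  have hparseval := inner_eq_inner_mul_inner_add_imagMul hq 0 r r
  rw [real_inner_self_eq_norm_sq, hr] at hparseval
  by_contra! hnone
  have h₀ := hnone 0
  have h₁ := hnone 1
  have h₂ := hnone 2
  simp only [IsAligned, not_le, zero_add] at h₀ h₁ h₂ hparseval
  linarith

lemma IsAligned.inner_imagMul_ne_zero (h : IsAligned u q r) (hqr : 1 / 2 ≤ ⟪q, r⟫)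
    (hqr' : ⟪q, r⟫ < 1) : ⟪imagMul u q, r⟫ ≠ 0 := by
  intro h₀
  unfold IsAligned at h
  rw [h₀] at h
  nlinarith

lemma sum_sq_inner_imagMul (hp : ‖p‖ = 1) (hq : ‖q‖ = 1) (hqp : ⟪q, p⟫ = 1 / 2) :
    ⟪imagMul u q, p⟫ ^ 2 + ⟪imagMul (u + 1) q, p⟫ ^ 2 + ⟪imagMul (u + 2) q, p⟫ ^ 2 = 3 / 4 := by
  have h := inner_eq_inner_mul_inner_add_imagMul hq u p p
  rw [real_inner_self_eq_norm_sq, hp, hqp] at h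
  linarith

lemma IsAligned.abs_lt_abs_inner_imagMul (h : IsAligned u q r) (hp : ‖p‖ = 1) (hq : ‖q‖ = 1)
    (hqp : ⟪q, p⟫ = 1 / 2) (hqr : 1 / 2 ≤ ⟪q, r⟫) (hqr' : ⟪q, r⟫ < 1) :
    |2 / 3 * ⟪imagMul u q, p⟫ * (1 - ⟪q, r⟫)| < |⟪imagMul u q, r⟫| := by
  refine sq_lt_sq.1 (lt_of_lt_of_le ?_ h)
  have haxis : ⟪imagMul u q, p⟫ ^ 2 ≤ 3 / 4 := by
    rw [← sum_sq_inner_imagMul (u := u) hp hq hqp]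
    linarith [sq_nonneg ⟪imagMul (u + 1) q, p⟫, sq_nonneg ⟪imagMul (u + 2) q, p⟫]
  calc (2 / 3 * ⟪imagMul u q, p⟫ * (1 - ⟪q, r⟫)) ^ 2
      = 4 / 9 * (⟪imagMul u q, p⟫ ^ 2 * (1 - ⟪q, r⟫) ^ 2) := by ring
    _ ≤ 4 / 9 * (3 / 4 * (1 - ⟪q, r⟫) ^ 2) := by gcongr
    _ < (1 - ⟪q, r⟫ ^ 2) / 3 := by nlinarith

lemma IsAligned.axialDefect_pos (h : IsAligned u q r) (hp : ‖p‖ = 1) (hq : ‖q‖ = 1)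
    (hqp : ⟪q, p⟫ = 1 / 2) (hqr : 1 / 2 ≤ ⟪q, r⟫) (hqr' : ⟪q, r⟫ < 1)
    (hpos : 0 < ⟪imagMul u q, r⟫) : 0 < axialDefect u q p r := by
  have := h.abs_lt_abs_inner_imagMul hp hq hqp hqr hqr'
  rw [abs_of_pos hpos] at this
  exact sub_pos.2 (abs_lt.1 this).2

lemma IsAligned.axialDefect_neg (h : IsAligned u q r) (hp : ‖p‖ = 1) (hq : ‖q‖ = 1)
    (hqp : ⟪q, p⟫ = 1 / 2) (hqr : 1 / 2 ≤ ⟪q, r⟫) (hqr' : ⟪q, r⟫ < 1)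
    (hneg : ⟪imagMul u q, r⟫ < 0) : axialDefect u q p r < 0 := by
  have := h.abs_lt_abs_inner_imagMul hp hq hqp hqr hqr'
  rw [abs_of_neg hneg] at this
  exact sub_neg.2 (by linarith [(abs_lt.1 this).1])

lemma turn_mul_turn_add_axialDefect_mul (hp : ‖p‖ = 1) (hq : ‖q‖ = 1) (hqp : ⟪q, p⟫ = 1 / 2)
    (hqp' : ⟪q, p'⟫ = 1 / 2) (hpr : ⟪p, r⟫ = 1 / 2) :
    turn u q p r * turn u q p p' + 3 / 4 * axialDefect u q p r *
        (⟪imagMul u q, p'⟫ - ⟪imagMul u q, p⟫ + 4 / 3 * ⟪imagMul u q, p⟫ * (1 - ⟪p, p'⟫)) =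
      (⟪imagMul (u + 1) q, p⟫ ^ 2 + ⟪imagMul (u + 2) q, p⟫ ^ 2) *
        (⟪p', r⟫ - 1 / 2 + 2 / 3 * (1 - ⟪q, r⟫) * (1 - ⟪p, p'⟫)) := by
  have hsphere := sum_sq_inner_imagMul (u := u) hp hq hqp
  have hpr' := inner_eq_inner_mul_inner_add_imagMul hq u p r
  have hpp' := inner_eq_inner_mul_inner_add_imagMul hq u p p'
  rw [hpr, hqp] at hpr'
  rw [hqp, hqp'] at hpp'
  rw [inner_eq_inner_mul_inner_add_imagMul hq u p' r, hqp', hpp']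
  have hqr : ⟪q, r⟫ = 1 - 2 * (⟪imagMul u q, p⟫ * ⟪imagMul u q, r⟫ +
      ⟪imagMul (u + 1) q, p⟫ * ⟪imagMul (u + 1) q, r⟫ +
      ⟪imagMul (u + 2) q, p⟫ * ⟪imagMul (u + 2) q, r⟫) := by linarith
  simp only [turn, axialDefect, hqr]
  linear_combination (4 / 3 * (⟪imagMul u q, p⟫ * ⟪imagMul u q, r⟫ +
      ⟪imagMul (u + 1) q, p⟫ * ⟪imagMul (u + 1) q, r⟫ +
      ⟪imagMul (u + 2) q, p⟫ * ⟪imagMul (u + 2) q, r⟫) *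
    (⟪imagMul u q, p⟫ * ⟪imagMul u q, p'⟫ +
      ⟪imagMul (u + 1) q, p⟫ * ⟪imagMul (u + 1) q, p'⟫ +
      ⟪imagMul (u + 2) q, p⟫ * ⟪imagMul (u + 2) q, p'⟫) -
    ⟪imagMul u q, r⟫ * ⟪imagMul u q, p'⟫) * hsphere

lemma transverse_sq_pos_of_axialDefect_ne_zero (hp : ‖p‖ = 1) (hq : ‖q‖ = 1) (hqp : ⟪q, p⟫ = 1 / 2)
    (hpr : ⟪p, r⟫ = 1 / 2) (hdefect : axialDefect u q p r ≠ 0) :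
    0 < ⟪imagMul (u + 1) q, p⟫ ^ 2 + ⟪imagMul (u + 2) q, p⟫ ^ 2 := by
  refine lt_of_le_of_ne (by positivity) fun h => hdefect ?_
  have h₁ : ⟪imagMul (u + 1) q, p⟫ = 0 := by nlinarith
  have h₂ : ⟪imagMul (u + 2) q, p⟫ = 0 := by nlinarith
  have hsphere := sum_sq_inner_imagMul (u := u) hp hq hqp
  have hpr' := inner_eq_inner_mul_inner_add_imagMul hq u p r
  rw [h₁, h₂] at hsphere hpr'
  rw [hpr, hqp] at hpr'
  have hmul : ⟪imagMul u q, p⟫ * axialDefect u q p r = 0 := by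
    unfold axialDefect
    linear_combination -hpr' - 2 / 3 * (1 - ⟪q, r⟫) * hsphere
  refine (mul_eq_zero.1 hmul).resolve_left fun h₀ => ?_
  norm_num [h₀] at hsphere

lemma turn_mul_turn_add_axialDefect_mul_pos (hp : ‖p‖ = 1) (hq : ‖q‖ = 1) (hqp : ⟪q, p⟫ = 1 / 2)
    (hqp' : ⟪q, p'⟫ = 1 / 2) (hpr : ⟪p, r⟫ = 1 / 2) (hp'r : 1 / 2 ≤ ⟪p', r⟫) (hqr : ⟪q, r⟫ < 1)
    (hpp' : ⟪p, p'⟫ < 1) (hdefect : axialDefect u q p r ≠ 0) :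
    0 < turn u q p r * turn u q p p' + 3 / 4 * axialDefect u q p r *
      (⟪imagMul u q, p'⟫ - ⟪imagMul u q, p⟫ + 4 / 3 * ⟪imagMul u q, p⟫ * (1 - ⟪p, p'⟫)) := by
  rw [turn_mul_turn_add_axialDefect_mul hp hq hqp hqp' hpr]
  have : 0 < (1 - ⟪q, r⟫) * (1 - ⟪p, p'⟫) := mul_pos (sub_pos.2 hqr) (sub_pos.2 hpp')
  exact mul_pos (transverse_sq_pos_of_axialDefect_ne_zero hp hq hqp hpr hdefect) (by linarith)

/-- Two neighbors `r₁`, `r₂` of `p` on opposite sides of `q` force all neighbors `p'` of `q` to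
turn in the same direction from `p`: eliminating the unknown second factor of
`turn_mul_turn_add_axialDefect_mul_pos` leaves a multiple of `turn u q p p'` independent of `p'`. -/
lemma exists_forall_mul_turn_pos {r₁ r₂ : ℝ⁴} (hp : ‖p‖ = 1) (hq : ‖q‖ = 1)
    (hqp : ⟪q, p⟫ = 1 / 2) (hpr₁ : ⟪p, r₁⟫ = 1 / 2) (hpr₂ : ⟪p, r₂⟫ = 1 / 2)
    (hqr₁ : ⟪q, r₁⟫ < 1) (hqr₂ : ⟪q, r₂⟫ < 1)
    (hneg : axialDefect u q p r₁ < 0) (hpos : 0 < axialDefect u q p r₂) :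
    ∃ K : ℝ, ∀ p' : ℝ⁴, ⟪q, p'⟫ = 1 / 2 → 1 / 2 ≤ ⟪p', r₁⟫ → 1 / 2 ≤ ⟪p', r₂⟫ →
      ⟪p, p'⟫ < 1 → 0 < K * turn u q p p' := by
  refine ⟨turn u q p r₁ * axialDefect u q p r₂ - turn u q p r₂ * axialDefect u q p r₁,
    fun p' hqp' hp'r₁ hp'r₂ hpp' => ?_⟩
  have h₁ := turn_mul_turn_add_axialDefect_mul_pos hp hq hqp hqp' hpr₁ hp'r₁ hqr₁ hpp' hneg.ne
  have h₂ := turn_mul_turn_add_axialDefect_mul_pos hp hq hqp hqp' hpr₂ hp'r₂ hqr₂ hpp' hpos.ne'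
  linarith [mul_pos h₁ hpos, mul_pos h₂ (neg_pos.2 hneg)]

end QuaternionFrame

section UnitPairsOnSphere

lemma inner_eq_half_of_norm_sub_eq_one {E : Type*} [NormedAddCommGroup E] [InnerProductSpace ℝ E]
    {x y : E} (hx : ‖x‖ = 1) (hy : ‖y‖ = 1) (h : ‖x - y‖ = 1) : ⟪x, y⟫ = 1 / 2 := by
  have := norm_sub_sq_real x y
  rw [hx, hy, h] at this
  linarith

lemma half_le_inner_of_norm_sub_le_one {E : Type*} [NormedAddCommGroup E] [InnerProductSpace ℝ E]
    {x y : E} (hx : ‖x‖ = 1) (hy : ‖y‖ = 1) (h : ‖x - y‖ ≤ 1) : 1 / 2 ≤ ⟪x, y⟫ := by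
  have := norm_sub_sq_real x y
  rw [hx, hy] at this
  linarith [pow_le_one₀ (norm_nonneg _) h (n := 2)]

variable {S : Finset ℝ⁴} {u : Fin 3} {p q r r₁ r₂ : ℝ⁴}

/-- The neighbors `p` of `q` in `S` from which all other neighbors of `q` turn, as measured by
`turn u q`, in the direction given by the sign of `ε`. -/
noncomputable def turnExtremes (S : Finset ℝ⁴) (u : Fin 3) (ε : ℝ) (q : ℝ⁴) : Finset ℝ⁴ :=
  {p ∈ unitNeighbors S q | ∀ p' ∈ unitNeighbors S q, p' ≠ p → 0 < ε * turn u q p p'}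

/-- The neighbors of `q` in `S` that are extreme for one of the three axes and two directions. -/
noncomputable def extremeNeighbors (S : Finset ℝ⁴) (q : ℝ⁴) : Finset ℝ⁴ :=
  univ.biUnion fun u => turnExtremes S u 1 q ∪ turnExtremes S u (-1) q

/-- The neighbors `q` of `p` in `S` for which `p` is not an extreme neighbor. -/
noncomputable def nonextremeNeighbors (S : Finset ℝ⁴) (p : ℝ⁴) : Finset ℝ⁴ :=
  {q ∈ unitNeighbors S p | p ∉ extremeNeighbors S q}

lemma card_turnExtremes_le_one (ε : ℝ) : #(turnExtremes S u ε q) ≤ 1 := by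
  refine card_le_one.2 fun p hp p' hp' => ?_
  obtain ⟨hpN, hp⟩ := mem_filter.1 hp
  obtain ⟨hp'N, hp'⟩ := mem_filter.1 hp'
  by_contra hne
  have h₁ := hp p' hp'N (Ne.symm hne)
  have h₂ := hp' p hpN hne
  rw [turn_comm] at h₂
  linarith

lemma card_extremeNeighbors_le : #(extremeNeighbors S q) ≤ 6 := by
  have haxis (u : Fin 3) : #(turnExtremes S u 1 q ∪ turnExtremes S u (-1) q) ≤ 2 :=
    (card_union_le _ _).trans
      (add_le_add (card_turnExtremes_le_one 1) (card_turnExtremes_le_one (-1)))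
  exact card_biUnion_le_card_mul _ _ 2 fun u _ => haxis u

lemma mem_extremeNeighbors_of_mul_turn_pos {K : ℝ} (hp : p ∈ unitNeighbors S q)
    (h : ∀ p' ∈ unitNeighbors S q, p' ≠ p → 0 < K * turn u q p p') :
    p ∈ extremeNeighbors S q := by
  refine mem_biUnion.2 ⟨u, mem_univ _, mem_union.2 ?_⟩
  rcases le_or_gt 0 K with hK | hK
  · refine .inl (mem_filter.2 ⟨hp, fun p' hp' hne => ?_⟩)
    simpa using pos_of_mul_pos_right (h p' hp' hne) hK
  · refine .inr (mem_filter.2 ⟨hp, fun p' hp' hne => ?_⟩)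
    simpa using neg_of_mul_pos_right (h p' hp' hne) hK.le

variable (hS : ∀ p ∈ S, ‖p‖ = 1) (hd : DiamLEOne S)
include hS hd

lemma not_opposite_of_mem_nonextremeNeighbors (hp : p ∈ S) (hq : q ∈ nonextremeNeighbors S p)
    (hr₁ : r₁ ∈ unitNeighbors S p) (hr₂ : r₂ ∈ unitNeighbors S p) (h₁ : IsAligned u q r₁)
    (h₂ : IsAligned u q r₂) (hneg : ⟪imagMul u q, r₁⟫ < 0) : ¬ 0 < ⟪imagMul u q, r₂⟫ := by
  intro hpos
  obtain ⟨hqN, hnot⟩ := mem_filter.1 hq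
  have hqS := (mem_unitNeighbors.1 hqN).1
  have hadj {x y : ℝ⁴} (hx : x ∈ S) (hy : y ∈ unitNeighbors S x) : ⟪x, y⟫ = 1 / 2 := by
    obtain ⟨hyS, hyx⟩ := mem_unitNeighbors.1 hy
    exact inner_eq_half_of_norm_sub_eq_one (hS x hx) (hS y hyS) (by rwa [norm_sub_rev])
  have hge {x y : ℝ⁴} (hx : x ∈ S) (hy : y ∈ S) : 1 / 2 ≤ ⟪x, y⟫ :=
    half_le_inner_of_norm_sub_le_one (hS x hx) (hS y hy) (hd x hx y hy)
  have hlt {x y : ℝ⁴} (hx : x ∈ S) (hy : y ∈ S) (hxy : x ≠ y) : ⟪x, y⟫ < 1 :=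
    (inner_lt_one_iff_real_of_norm_eq_one (hS x hx) (hS y hy)).2 hxy
  have hne {r : ℝ⁴} (hr : ⟪imagMul u q, r⟫ ≠ 0) : q ≠ r := by
    rintro rfl
    exact hr (self_eq_neg.1 (inner_imagMul_left u q q))
  have hr₁S := (mem_unitNeighbors.1 hr₁).1
  have hr₂S := (mem_unitNeighbors.1 hr₂).1
  have hqr₁ := hlt hqS hr₁S (hne hneg.ne)
  have hqr₂ := hlt hqS hr₂S (hne hpos.ne')
  have hqp : ⟪q, p⟫ = 1 / 2 := by rw [real_inner_comm, hadj hp hqN]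
  obtain ⟨K, hK⟩ := exists_forall_mul_turn_pos (hS p hp) (hS q hqS) hqp (hadj hp hr₁) (hadj hp hr₂)
    hqr₁ hqr₂ (h₁.axialDefect_neg (hS p hp) (hS q hqS) hqp (hge hqS hr₁S) hqr₁ hneg)
    (h₂.axialDefect_pos (hS p hp) (hS q hqS) hqp (hge hqS hr₂S) hqr₂ hpos)
  refine hnot (mem_extremeNeighbors_of_mul_turn_pos (K := K) (u := u)
    ((mem_unitNeighbors_comm hqS hp).1 hqN) fun p' hp' hne => ?_)
  have hp'S := (mem_unitNeighbors.1 hp').1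
  exact hK p' (hadj hqS hp') (hge hp'S hr₁S) (hge hp'S hr₂S) (hlt hp hp'S hne.symm)

/-- Each `q` determines, for each axis `u`, on which side of `q` the neighbors of `p` aligned with
that axis lie. Distinct `q` and `r` are told apart by the axis that aligns them with each other. -/
lemma card_nonextremeNeighbors_le (hp : p ∈ S) : #(nonextremeNeighbors S p) ≤ 8 := by
  let side (q : ℝ⁴) (u : Fin 3) : Bool :=
    decide (∃ r ∈ unitNeighbors S p, IsAligned u q r ∧ 0 < ⟪imagMul u q, r⟫)
  have hside {q r : ℝ⁴} {u : Fin 3} (hq : q ∈ nonextremeNeighbors S p)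
      (hr : r ∈ nonextremeNeighbors S p) (hqr : IsAligned u q r)
      (hpos : 0 < ⟪imagMul u q, r⟫) : side q ≠ side r := by
    intro heq
    have hq_side : side q u = true :=
      decide_eq_true ⟨r, (mem_filter.1 hr).1, hqr, hpos⟩
    rw [heq] at hq_side
    obtain ⟨t, ht, hrt, htpos⟩ := of_decide_eq_true hq_side
    refine not_opposite_of_mem_nonextremeNeighbors hS hd hp hr (mem_filter.1 hq).1 ht hqr.symm hrt
      ?_ htpos
    rw [inner_imagMul_left]
    exact neg_neg_of_pos hpos
  have hinj : Set.InjOn side (nonextremeNeighbors S p) := by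
    intro q hq r hr heq
    by_contra hne
    have hqS := (mem_unitNeighbors.1 (mem_filter.1 hq).1).1
    have hrS := (mem_unitNeighbors.1 (mem_filter.1 hr).1).1
    obtain ⟨u, hqr⟩ := exists_isAligned (hS q hqS) (hS r hrS)
    rcases lt_or_gt_of_ne (hqr.inner_imagMul_ne_zero
      (half_le_inner_of_norm_sub_le_one (hS q hqS) (hS r hrS) (hd q hqS r hrS))
      ((inner_lt_one_iff_real_of_norm_eq_one (hS q hqS) (hS r hrS)).2 hne)) with hneg | hpos
    · refine hside hr hq hqr.symm ?_ heq.symm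
      rw [inner_imagMul_left]
      exact neg_pos_of_neg hneg
    · exact hside hq hr hqr hpos heq
  simpa using card_le_card_of_injOn side (fun _ _ => mem_univ _) hinj

lemma card_unitPairs_le_of_norm_eq_one : #(unitPairs S) ≤ 7 * #S := by
  have hsplit (p : ℝ⁴) : #(unitNeighbors S p) =
      #{q ∈ unitNeighbors S p | p ∈ extremeNeighbors S q} + #(nonextremeNeighbors S p) :=
    (card_filter_add_card_filter_not _).symm
  have hextreme : ∑ p ∈ S, #{q ∈ unitNeighbors S p | p ∈ extremeNeighbors S q} ≤ #S * 6 :=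
    calc ∑ p ∈ S, #{q ∈ unitNeighbors S p | p ∈ extremeNeighbors S q}
        ≤ ∑ p ∈ S, #{q ∈ S | p ∈ extremeNeighbors S q} := by
          gcongr
          exact unitNeighbors_subset
      _ = ∑ q ∈ S, #{p ∈ S | p ∈ extremeNeighbors S q} :=
          sum_card_bipartiteAbove_eq_sum_card_bipartiteBelow _
      _ ≤ #S * 6 := sum_le_card_nsmul _ _ _ fun q _ =>
          (card_le_card fun p hp => (mem_filter.1 hp).2).trans card_extremeNeighbors_le
  have hnonextreme : ∑ p ∈ S, #(nonextremeNeighbors S p) ≤ #S * 8 :=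
    sum_le_card_nsmul _ _ _ fun p hp => card_nonextremeNeighbors_le hS hd hp
  have hdeg := sum_card_unitNeighbors S
  simp only [hsplit, sum_add_distrib] at hdeg
  omega

omit hS hd

lemma card_unitPairs_le_of_norm_sub_eq_one {z : ℝ⁴} (hS : ∀ p ∈ S, ‖p - z‖ = 1)
    (hd : DiamLEOne S) : #(unitPairs S) ≤ 7 * #S := by
  have hdeg : ∀ p ∈ S, #(unitNeighbors S p) = #(unitNeighbors (S.image (· - z)) (p - z)) := by
    intro p _
    rw [← card_image_of_injective (unitNeighbors S p) (sub_left_injective (b := z))]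
    simp [unitNeighbors, filter_image]
  have hsum := sum_card_unitNeighbors (S.image (· - z))
  rw [sum_image (sub_left_injective.injOn), ← sum_congr rfl hdeg, sum_card_unitNeighbors] at hsum
  rw [Nat.eq_of_mul_eq_mul_left two_pos hsum,
    ← card_image_of_injective S (sub_left_injective (b := z))]
  refine card_unitPairs_le_of_norm_eq_one (by simpa using hS) ?_
  simpa [DiamLEOne] using hd

end UnitPairsOnSphere

section LenzConfiguration

open Submodule

variable {E : Type*} [NormedAddCommGroup E] [InnerProductSpace ℝ E] {A B S T : Finset E} {x z : E}
  {ρ : ℝ}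

/-- The point set `S` lies on a circle of squared radius `ρ`, with center `c` and in the plane
`c + V`. -/
def IsOnCircle (S : Finset E) (ρ : ℝ) : Prop :=
  ∃ (c : E) (V : Submodule ℝ E), finrank ℝ V = 2 ∧ ∀ x ∈ S, x - c ∈ V ∧ ‖x - c‖ ^ 2 = ρ

lemma isOrtho_vectorSpan_of_norm_sub_eq_one (hAB : ∀ a ∈ A, ∀ b ∈ B, ‖a - b‖ = 1) :
    vectorSpan ℝ (A : Set E) ⟂ vectorSpan ℝ (B : Set E) := by
  refine isOrtho_span.2 ?_
  rintro - ⟨a, ha, a', ha', rfl⟩ - ⟨b, hb, b', hb', rfl⟩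
  have hdist {a : E} (ha : a ∈ A) : dist b' a = dist b a := by
    rw [dist_comm, dist_comm b, dist_eq_norm, dist_eq_norm, hAB a ha b hb, hAB a ha b' hb']
  exact EuclideanGeometry.inner_vsub_vsub_of_dist_eq_of_dist_eq (hdist ha') (hdist ha)

lemma two_le_finrank_vectorSpan (hS : ∀ x ∈ S, ‖x - z‖ = 1) (hcard : 2 < #S) :
    2 ≤ finrank ℝ (vectorSpan ℝ (S : Set E)) := by
  obtain ⟨a, b, c, ha, hb, hc, hab, hac, hbc⟩ := two_lt_card_iff.1 hcard
  have hsphere : EuclideanGeometry.Cospherical (S : Set E) :=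
    ⟨z, 1, fun x hx => by rw [dist_eq_norm, hS x hx]⟩
  have hindep := hsphere.affineIndependent_of_mem_of_ne ha hb hc hab hac hbc
  rw [← hindep.finrank_vectorSpan (n := 2) (by simp)]
  have := finiteDimensional_vectorSpan_of_finite ℝ S.finite_toSet
  refine finrank_mono (vectorSpan_mono ℝ ?_)
  rintro - ⟨i, rfl⟩
  fin_cases i <;> assumption

lemma norm_sub_sq_of_mem_orthogonal {V : Submodule ℝ E} {u v : E} (hu : u ∈ V) (hv : v ∈ Vᗮ) :
    ‖u - v‖ ^ 2 = ‖u‖ ^ 2 + ‖v‖ ^ 2 := by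
  rw [norm_sub_sq_real, inner_right_of_mem_orthogonal hu hv]
  ring

lemma exists_isOnCircle_of_norm_sub_eq_one [FiniteDimensional ℝ E] (hE : finrank ℝ E = 4)
    (hAB : ∀ a ∈ A, ∀ b ∈ B, ‖a - b‖ = 1) (hA : 2 < #A) (hB : 2 < #B) :
    ∃ ρ σ : ℝ, ρ + σ = 1 ∧ IsOnCircle A ρ ∧ IsOnCircle B σ := by
  obtain ⟨a₀, ha₀⟩ := card_pos.1 (zero_lt_two.trans hA)
  obtain ⟨b₀, hb₀⟩ := card_pos.1 (zero_lt_two.trans hB)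
  let V := vectorSpan ℝ (A : Set E)
  let W := vectorSpan ℝ (B : Set E)
  have hWV : W ≤ Vᗮ := (isOrtho_vectorSpan_of_norm_sub_eq_one hAB).symm
  have hfinV : 2 ≤ finrank ℝ V := two_le_finrank_vectorSpan (fun a ha => hAB a ha b₀ hb₀) hA
  have hfinW : 2 ≤ finrank ℝ W :=
    two_le_finrank_vectorSpan (fun b hb => by rw [norm_sub_rev, hAB a₀ ha₀ b hb]) hB
  have hle := finrank_mono hWV
  have hsum := V.finrank_add_finrank_orthogonal
  obtain ⟨p, hp, q, hq, hpq⟩ := V.exists_add_mem_mem_orthogonal (a₀ - b₀)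
  have hcenter : a₀ - p = b₀ + q := by
    rw [sub_eq_iff_eq_add, add_assoc, add_comm q p, ← hpq]
    abel
  have hAV : ∀ a ∈ A, a - (a₀ - p) ∈ V := fun a ha => by
    rw [sub_sub_eq_add_sub, add_sub_right_comm]
    exact V.add_mem (vsub_mem_vectorSpan ℝ ha ha₀) hp
  have hBV : ∀ b ∈ B, b - (a₀ - p) ∈ Vᗮ := fun b hb => by
    rw [hcenter, ← sub_sub]
    exact sub_mem (hWV (vsub_mem_vectorSpan ℝ hb hb₀)) hq
  have hpyth : ∀ a ∈ A, ∀ b ∈ B, ‖a - (a₀ - p)‖ ^ 2 + ‖b - (a₀ - p)‖ ^ 2 = 1 := fun a ha b hb => by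
    rw [← norm_sub_sq_of_mem_orthogonal (hAV a ha) (hBV b hb), sub_sub_sub_cancel_right,
      hAB a ha b hb, one_pow]
  refine ⟨_, _, hpyth a₀ ha₀ b₀ hb₀, ⟨a₀ - p, V, by omega, fun a ha => ⟨hAV a ha, ?_⟩⟩,
    ⟨a₀ - p, Vᗮ, by omega, fun b hb => ⟨hBV b hb, ?_⟩⟩⟩
  · linarith [hpyth a ha b₀ hb₀, hpyth a₀ ha₀ b₀ hb₀]
  · linarith [hpyth a₀ ha₀ b hb, hpyth a₀ ha₀ b₀ hb₀]

lemma IsOnCircle.norm_sub_eq_one (hA : IsOnCircle A ρ) (hTA : T ⊆ A) (hT : 2 < #T)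
    (hx : ∀ a ∈ T, ‖a - x‖ = 1) : ∀ a ∈ A, ‖a - x‖ = 1 := by
  obtain ⟨c, V, hV, hcirc⟩ := hA
  obtain ⟨a₀, ha₀⟩ := card_pos.1 (zero_lt_two.trans hT)
  have : FiniteDimensional ℝ V := .of_finrank_pos (by omega)
  have hle : vectorSpan ℝ (T : Set E) ≤ V := by
    refine span_le.2 ?_
    rintro - ⟨a, ha, b, hb, rfl⟩
    change a - b ∈ V
    rw [← sub_sub_sub_cancel_right a b c]
    exact V.sub_mem (hcirc a (hTA ha)).1 (hcirc b (hTA hb)).1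
  have hspan : vectorSpan ℝ (T : Set E) = V :=
    eq_of_le_of_finrank_le hle (hV.trans_le (two_le_finrank_vectorSpan hx hT))
  have hxV : x - c ∈ Vᗮ := by
    rw [← hspan]
    refine (mem_orthogonal' _ _).2 ((span_le (p := LinearMap.ker (innerₛₗ ℝ (x - c)))).2 ?_)
    rintro - ⟨a, ha, b, hb, rfl⟩
    refine EuclideanGeometry.inner_vsub_vsub_of_dist_eq_of_dist_eq (P := E) ?_ ?_
    · rw [dist_eq_norm, dist_eq_norm, ← sq_eq_sq₀ (norm_nonneg _) (norm_nonneg _),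
        (hcirc _ (hTA hb)).2, (hcirc _ (hTA ha)).2]
    · rw [dist_eq_norm, dist_eq_norm, hx a ha, hx b hb]
  have hpyth : ∀ a ∈ A, ‖a - x‖ ^ 2 = ρ + ‖x - c‖ ^ 2 := fun a ha => by
    rw [← sub_sub_sub_cancel_right a x c, norm_sub_sq_of_mem_orthogonal (hcirc a ha).1 hxV,
      (hcirc a ha).2]
  intro a ha
  rw [← hx a₀ ha₀, ← sq_eq_sq₀ (norm_nonneg _) (norm_nonneg _), hpyth a ha, hpyth a₀ (hTA ha₀)]

lemma IsOnCircle.exists_angle (hS : IsOnCircle S ρ) :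
    ∃ φ : E → ℝ, ∀ x ∈ S, ∀ y ∈ S, ‖x - y‖ ^ 2 = 2 * ρ * (1 - Real.cos (φ x - φ y)) := by
  obtain ⟨c, V, hV, hcirc⟩ := hS
  have : FiniteDimensional ℝ V := .of_finrank_pos (by omega)
  let e : V ≃ₗᵢ[ℝ] ℂ := (stdOrthonormalBasis ℝ V).equiv Complex.orthonormalBasisOneI (finCongr hV)
  let w (x : E) : ℂ := e (V.orthogonalProjectionOnto (x - c))
  have hproj {u : E} (hu : u ∈ V) : ‖e (V.orthogonalProjectionOnto u)‖ = ‖u‖ := by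
    rw [e.norm_map, coe_norm, coe_orthogonalProjectionOnto_apply, starProjection_eq_self_iff.2 hu]
  have hnorm : ∀ x ∈ S, ‖w x‖ = √ρ := fun x hx => by
    rw [hproj (hcirc x hx).1, ← (hcirc x hx).2, Real.sqrt_sq (norm_nonneg _)]
  refine ⟨fun x => (w x).arg, fun x hx y hy => ?_⟩
  have hρ : √ρ ^ 2 = ρ := by rw [← hnorm x hx, hproj (hcirc x hx).1, (hcirc x hx).2]
  have hxy : ‖x - y‖ ^ 2 = ‖w x - w y‖ ^ 2 := by
    rw [← map_sub, ← map_sub, sub_sub_sub_cancel_right, hproj]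
    rw [← sub_sub_sub_cancel_right x y c]
    exact V.sub_mem (hcirc x hx).1 (hcirc y hy).1
  rw [hxy, Complex.sq_norm, Complex.normSq_apply, Complex.sub_re, Complex.sub_im,
    ← Complex.norm_mul_cos_arg (w x), ← Complex.norm_mul_cos_arg (w y),
    ← Complex.norm_mul_sin_arg (w x), ← Complex.norm_mul_sin_arg (w y), hnorm x hx, hnorm y hy,
    Real.cos_sub]
  linear_combination (Real.cos (w x).arg ^ 2 + Real.sin (w x).arg ^ 2 + Real.cos (w y).arg ^ 2 +
    Real.sin (w y).arg ^ 2 - 2 * Real.cos (w x).arg * Real.cos (w y).arg -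
    2 * Real.sin (w x).arg * Real.sin (w y).arg) * hρ +
    ρ * Real.sin_sq_add_cos_sq (w x).arg + ρ * Real.sin_sq_add_cos_sq (w y).arg

end LenzConfiguration

section PointsOnCircle

open Real

variable {E : Type*} [NormedAddCommGroup E] {A B S : Finset E} {i j k x y : E} {ρ θ d : ℝ}
  {p : E → ℝ}

lemma card_unitPairs_union (hAB : Disjoint A B) :
    #(unitPairs (A ∪ B)) =
      #(unitPairs A) + #(unitPairs B) + ∑ b ∈ B, #(unitNeighbors A b) := by
  have hdeg (x : E) :
      #(unitNeighbors (A ∪ B) x) = #(unitNeighbors A x) + #(unitNeighbors B x) := by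
    rw [← card_union_of_disjoint (hAB.mono unitNeighbors_subset unitNeighbors_subset)]
    simp only [unitNeighbors, filter_union]
  have hsum := sum_card_unitNeighbors (A ∪ B)
  simp only [sum_union hAB, hdeg, sum_add_distrib, sum_card_unitNeighbors] at hsum
  have := sum_card_unitNeighbors_comm A B
  omega

lemma cos_le_cos_iff_of_lt_two_pi (hd₀ : 0 ≤ d) (hd : d < 2 * π) (hθ₀ : 0 ≤ θ) (hθ : θ ≤ π) :
    cos θ ≤ cos d ↔ d ≤ θ ∨ 2 * π - θ ≤ d := by
  rcases le_total d π with h | h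
  · rw [strictAntiOn_cos.le_iff_ge ⟨hθ₀, hθ⟩ ⟨hd₀, h⟩]
    constructor
    · exact .inl
    · rintro (_ | _) <;> linarith
  · rw [← cos_two_pi_sub d, strictAntiOn_cos.le_iff_ge ⟨hθ₀, hθ⟩ ⟨by linarith, by linarith⟩]
    constructor
    · exact fun _ => .inr (by linarith)
    · rintro (_ | _) <;> linarith

lemma cos_eq_cos_iff_of_lt_two_pi (hd₀ : 0 ≤ d) (hd : d < 2 * π) (hθ₀ : 0 ≤ θ) (hθ : θ ≤ π) :
    cos d = cos θ ↔ d = θ ∨ d = 2 * π - θ := by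
  rcases le_total d π with h | h
  · rw [strictAntiOn_cos.injOn.eq_iff ⟨hd₀, h⟩ ⟨hθ₀, hθ⟩]
    constructor
    · exact .inl
    · rintro (_ | _) <;> linarith
  · rw [← cos_two_pi_sub d, strictAntiOn_cos.injOn.eq_iff ⟨by linarith, by linarith⟩ ⟨hθ₀, hθ⟩]
    constructor
    · exact fun _ => .inr (by linarith)
    · rintro (_ | _) <;> linarith

/-- The function `p` records the angles in `[0, 2π)` at which the points of `S`, a set of diameter
`1`, are seen from the center of a circle through them. A chord has length `1` if it subtends the
angle `θ` or `2π - θ`, and the angles are measured from the endpoint `i` of a unit chord towards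
its other endpoint `j`. -/
structure IsArcCoordinate (S : Finset E) (i j : E) (θ : ℝ) (p : E → ℝ) : Prop where
  pos : 0 < θ
  le_pi : θ ≤ π
  left_mem : i ∈ S
  right_mem : j ∈ S
  left_eq : p i = 0
  right_eq : p j = θ
  nonneg : ∀ x ∈ S, 0 ≤ p x
  lt_two_pi : ∀ x ∈ S, p x < 2 * π
  injOn : Set.InjOn p S
  norm_sub_eq_one_iff : ∀ x ∈ S, ∀ y ∈ S,
    ‖x - y‖ = 1 ↔ |p x - p y| = θ ∨ |p x - p y| = 2 * π - θ
  abs_sub_le_or_le : ∀ x ∈ S, ∀ y ∈ S, |p x - p y| ≤ θ ∨ 2 * π - θ ≤ |p x - p y|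

lemma IsOnCircle.exists_angle_of_norm_sub_eq_one [InnerProductSpace ℝ E] (hS : IsOnCircle S ρ)
    (hi : i ∈ S) (hj : j ∈ S) (hij : ‖i - j‖ = 1) :
    ∃ θ ∈ Set.Icc 0 π, ∃ p : E → ℝ, 2 * ρ * (1 - cos θ) = 1 ∧ p i = 0 ∧ p j = θ ∧
      (∀ x, p x ∈ Set.Ico 0 (2 * π)) ∧
      ∀ x ∈ S, ∀ y ∈ S, ‖x - y‖ ^ 2 = 2 * ρ * (1 - cos (p x - p y)) := by
  obtain ⟨φ, hφ⟩ := hS.exists_angle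
  let θ := arccos (cos (φ i - φ j))
  have hθ₀ : 0 ≤ θ := arccos_nonneg _
  have hθπ : θ ≤ π := arccos_le_pi _
  have hθ : cos θ = cos (φ i - φ j) := cos_arccos (neg_one_le_cos _) (cos_le_one _)
  have horient : ∃ ψ : E → ℝ, (∃ n : ℤ, ψ j = θ + n * (2 * π)) ∧ ψ i = 0 ∧
      ∀ x ∈ S, ∀ y ∈ S, ‖x - y‖ ^ 2 = 2 * ρ * (1 - cos (ψ x - ψ y)) := by
    obtain ⟨n, hn | hn⟩ := cos_eq_cos_iff.1 hθ
    · refine ⟨fun x => φ i - φ x, ⟨n, by linarith⟩, sub_self _, fun x hx y hy => ?_⟩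
      rw [hφ x hx y hy, sub_sub_sub_cancel_left, ← cos_neg, neg_sub]
    · refine ⟨fun x => φ x - φ i, ⟨-n, by push_cast; linarith⟩, sub_self _, fun x hx y hy => ?_⟩
      rw [hφ x hx y hy, sub_sub_sub_cancel_right]
  obtain ⟨ψ, ⟨n, hψj⟩, hψi, hψ⟩ := horient
  refine ⟨θ, ⟨hθ₀, hθπ⟩, fun x => toIcoMod two_pi_pos 0 (ψ x), ?_, ?_, ?_,
    fun x => toIcoMod_mem_Ico' _ _, fun x hx y hy => ?_⟩
  · rw [hθ, ← hφ i hi j hj, hij, one_pow]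
  · beta_reduce
    rw [hψi, toIcoMod_apply_left]
  · beta_reduce
    rw [hψj, ← zsmul_eq_mul, toIcoMod_add_zsmul, toIcoMod_eq_self]
    exact ⟨hθ₀, by linarith [pi_pos]⟩
  · have hmod : toIcoMod two_pi_pos 0 (ψ x) - toIcoMod two_pi_pos 0 (ψ y) =
        ψ x - ψ y - (toIcoDiv two_pi_pos 0 (ψ x) - toIcoDiv two_pi_pos 0 (ψ y) : ℤ) * (2 * π) := by
      rw [← self_sub_toIcoDiv_mul, ← self_sub_toIcoDiv_mul]
      push_cast
      ring
    rw [hmod, cos_sub_int_mul_two_pi, hψ x hx y hy]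

lemma IsOnCircle.exists_isArcCoordinate [InnerProductSpace ℝ E] (hS : IsOnCircle S ρ)
    (hd : DiamLEOne S) (hi : i ∈ S) (hj : j ∈ S) (hij : ‖i - j‖ = 1) :
    ∃ θ p, 2 * ρ * (1 - cos θ) = 1 ∧ IsArcCoordinate S i j θ p := by
  obtain ⟨θ, ⟨hθ₀, hθπ⟩, p, hρθ, hpi, hpj, hp, hdist⟩ :=
    hS.exists_angle_of_norm_sub_eq_one hi hj hij
  have hθ : 0 < θ := hθ₀.lt_of_ne' fun h => by simp [h] at hρθ
  have hρ : 0 < 2 * ρ := by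
    have := cos_le_one θ
    by_contra!
    nlinarith
  have hcos : ∀ x ∈ S, ∀ y ∈ S, ‖x - y‖ ^ 2 - 1 = 2 * ρ * (cos θ - cos |p x - p y|) :=
    fun x hx y hy => by rw [hdist x hx y hy, cos_abs]; linear_combination hρθ
  have hlt (x y : E) : |p x - p y| < 2 * π :=
    abs_sub_lt_of_nonneg_of_lt (hp x).1 (hp x).2 (hp y).1 (hp y).2
  refine ⟨θ, p, hρθ, hθ, hθπ, hi, hj, hpi, hpj, fun x _ => (hp x).1, fun x _ => (hp x).2,
    fun x hx y hy hxy => ?_, fun x hx y hy => ?_, fun x hx y hy => ?_⟩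
  · have h := hdist x hx y hy
    rw [hxy, sub_self, cos_zero, sub_self, mul_zero] at h
    exact sub_eq_zero.1 (norm_eq_zero.1 (pow_eq_zero_iff two_ne_zero |>.1 h))
  · rw [← cos_eq_cos_iff_of_lt_two_pi (abs_nonneg _) (hlt x y) hθ₀ hθπ,
      ← pow_eq_one_iff_of_nonneg (norm_nonneg _) two_ne_zero, ← sub_eq_zero, hcos x hx y hy,
      mul_eq_zero_iff_left hρ.ne', sub_eq_zero, eq_comm]
  · rw [← cos_le_cos_iff_of_lt_two_pi (abs_nonneg _) (hlt x y) hθ₀ hθπ, ← sub_nonpos,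
      ← mul_le_mul_iff_of_pos_left hρ, ← hcos x hx y hy, mul_zero, sub_nonpos]
    exact pow_le_one₀ (norm_nonneg _) (hd x hx y hy)

lemma exists_unitPair_of_card_pos (h : 0 < #(unitPairs S)) : ∃ i ∈ S, ∃ j ∈ S, ‖i - j‖ = 1 := by
  obtain ⟨s, hs⟩ := card_pos.1 h
  obtain ⟨i, hi, j, hj, hij, -⟩ := mem_unitPairs.1 hs
  exact ⟨i, hi, j, hj, hij⟩

namespace IsArcCoordinate

variable (h : IsArcCoordinate S i j θ p)

include h

lemma card_unitNeighbors_le_two (hx : x ∈ S) : #(unitNeighbors S x) ≤ 2 := by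
  let forward := if p x + θ < 2 * π then p x + θ else p x + θ - 2 * π
  let backward := if θ ≤ p x then p x - θ else p x - θ + 2 * π
  refine (card_le_card_of_injOn p (t := {forward, backward}) (fun y hy => ?_)
    (h.injOn.mono unitNeighbors_subset)).trans card_le_two
  obtain ⟨hy, hyx⟩ := mem_unitNeighbors.1 hy
  have := h.nonneg y hy
  have := h.lt_two_pi y hy
  have := h.nonneg x hx
  have := h.lt_two_pi x hx
  have := (h.norm_sub_eq_one_iff y hy x hx).1 hyx
  simp only [coe_insert, coe_singleton, Set.mem_insert_iff, Set.mem_singleton_iff]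
  grind

lemma card_unitPairs_le : #(unitPairs S) ≤ #S := by
  have hsum := sum_le_card_nsmul S _ 2 fun x hx => h.card_unitNeighbors_le_two hx
  rw [sum_card_unitNeighbors, smul_eq_mul] at hsum
  omega

lemma le_two_mul (hx : x ∈ S) : p x ≤ 2 * θ := by
  have := h.abs_sub_le_or_le x hx j h.right_mem
  have := h.nonneg x hx
  have := h.lt_two_pi x hx
  have := h.le_pi
  rw [h.right_eq] at *
  grind

lemma two_pi_sub_le (hx : x ∈ S) (hpx : θ < p x) : 2 * π - θ ≤ p x := by
  have := h.abs_sub_le_or_le x hx i h.left_mem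
  have := h.nonneg x hx
  rw [h.left_eq] at *
  grind

lemma unitPairs_filter_lt : unitPairs {x ∈ S | θ < p x} = ∅ := by
  refine eq_empty_of_forall_notMem fun s hs => ?_
  obtain ⟨x, hx, y, hy, hxy, -⟩ := mem_unitPairs.1 hs
  obtain ⟨hx, hpx⟩ := mem_filter.1 hx
  obtain ⟨hy, hpy⟩ := mem_filter.1 hy
  have := (h.norm_sub_eq_one_iff x hx y hy).1 hxy
  have := h.le_two_mul hx
  have := h.le_two_mul hy
  have := h.le_pi
  grind

lemma norm_sub_eq_one : ‖i - j‖ = 1 := by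
  rw [h.norm_sub_eq_one_iff i h.left_mem j h.right_mem, h.left_eq, h.right_eq, zero_sub, abs_neg,
    abs_of_pos h.pos]
  exact .inl rfl

lemma unitPairs_filter_le : unitPairs {x ∈ S | p x ≤ θ} = {{i, j}} := by
  refine subset_antisymm (fun s hs => ?_) (singleton_subset_iff.2 (pair_mem_unitPairs ?_ ?_ ?_))
  · obtain ⟨x, hx, y, hy, hxy, rfl⟩ := mem_unitPairs.1 hs
    obtain ⟨hx, hpx⟩ := mem_filter.1 hx
    obtain ⟨hy, hpy⟩ := mem_filter.1 hy
    have hends : p x = p i ∧ p y = p j ∨ p x = p j ∧ p y = p i := by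
      have := (h.norm_sub_eq_one_iff x hx y hy).1 hxy
      have := h.nonneg x hx
      have := h.nonneg y hy
      have := h.le_pi
      rw [h.left_eq, h.right_eq]
      grind
    rw [mem_singleton]
    rcases hends with ⟨hxi, hyj⟩ | ⟨hxj, hyi⟩
    · rw [h.injOn hx h.left_mem hxi, h.injOn hy h.right_mem hyj]
    · rw [h.injOn hx h.right_mem hxj, h.injOn hy h.left_mem hyi, pair_comm]
  · exact mem_filter.2 ⟨h.left_mem, h.left_eq.trans_le h.pos.le⟩
  · exact mem_filter.2 ⟨h.right_mem, h.right_eq.le⟩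
  · exact h.norm_sub_eq_one

lemma card_unitPairs_eq :
    #(unitPairs S) = 1 + ∑ x ∈ S with θ < p x, #(unitNeighbors S x) := by
  have hunion : {x ∈ S | p x ≤ θ} ∪ {x ∈ S | θ < p x} = S := by
    rw [← filter_or, filter_true_of_mem fun x _ => le_or_gt _ _]
  have hdisj : Disjoint {x ∈ S | p x ≤ θ} {x ∈ S | θ < p x} :=
    disjoint_filter.2 fun x _ => not_lt_of_ge
  have hcard := card_unitPairs_union hdisj
  rw [hunion, h.unitPairs_filter_le, h.unitPairs_filter_lt, card_singleton, card_empty,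
    add_zero] at hcard
  rw [hcard]
  refine congrArg _ (sum_congr rfl fun x hx => congrArg card ?_)
  ext y
  simp only [mem_unitNeighbors, mem_filter]
  refine ⟨fun hy => ⟨hy.1.1, hy.2⟩, fun hy => ⟨⟨hy.1, ?_⟩, hy.2⟩⟩
  by_contra! hpy
  have hyx := pair_mem_unitPairs (mem_filter.2 ⟨hy.1, hpy⟩) hx hy.2
  simp [h.unitPairs_filter_lt] at hyx

lemma card_unitPairs_eq_one (hθ : 3 * θ < 2 * π) : #(unitPairs S) = 1 := by
  rw [h.card_unitPairs_eq, filter_false_of_mem, sum_empty, add_zero]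
  intro x hx hpx
  linarith [h.le_two_mul hx, h.two_pi_sub_le hx hpx]

lemma odd_card (hcard : #(unitPairs S) = #S) : Odd #S := by
  have hsum : ∑ x ∈ S, #(unitNeighbors S x) = ∑ x ∈ S, 2 := by
    rw [sum_card_unitNeighbors, hcard, sum_const, smul_eq_mul, mul_comm]
  have hdeg := (sum_eq_sum_iff_of_le fun x hx => h.card_unitNeighbors_le_two hx).1 hsum
  rw [← hcard, h.card_unitPairs_eq,
    sum_congr rfl fun x hx => hdeg x (mem_of_mem_filter x hx), sum_const, smul_eq_mul, add_comm]
  exact ⟨_, by rw [mul_comm]⟩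

lemma subset_insert_pair (hk : k ∈ S) (hik : ‖i - k‖ = 1) (hjk : ‖j - k‖ = 1) :
    S ⊆ {i, j, k} := by
  have hpk := (h.norm_sub_eq_one_iff i h.left_mem k hk).1 hik
  have hpjk := (h.norm_sub_eq_one_iff j h.right_mem k hk).1 hjk
  intro x hx
  have hx' : p x = p i ∨ p x = p j ∨ p x = p k := by
    have := h.nonneg k hk
    have := h.nonneg x hx
    have := h.le_two_mul hx
    have := h.two_pi_sub_le hx
    have := h.abs_sub_le_or_le x hx k hk
    have := h.pos
    have := h.le_pi
    rw [h.left_eq, h.right_eq] at *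
    grind
  simp only [mem_insert, mem_singleton]
  exact hx'.imp (h.injOn hx h.left_mem) (.imp (h.injOn hx h.right_mem) (h.injOn hx hk))

end IsArcCoordinate

variable [InnerProductSpace ℝ E]

namespace IsOnCircle

variable (hS : IsOnCircle S ρ) (hd : DiamLEOne S)

include hS hd

lemma card_unitPairs_le : #(unitPairs S) ≤ #S := by
  rcases Nat.eq_zero_or_pos #(unitPairs S) with h0 | hpos
  · omega
  · obtain ⟨i, hi, j, hj, hij⟩ := exists_unitPair_of_card_pos hpos
    obtain ⟨θ, p, -, h⟩ := hS.exists_isArcCoordinate hd hi hj hij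
    exact h.card_unitPairs_le

lemma odd_card_of_card_unitPairs_eq (hne : S.Nonempty) (hcard : #(unitPairs S) = #S) :
    Odd #S := by
  obtain ⟨i, hi, j, hj, hij⟩ := exists_unitPair_of_card_pos (hcard ▸ hne.card_pos)
  obtain ⟨θ, p, -, h⟩ := hS.exists_isArcCoordinate hd hi hj hij
  exact h.odd_card hcard

lemma card_unitPairs_le_one (hρ : 1 / 2 ≤ ρ) : #(unitPairs S) ≤ 1 := by
  rcases Nat.eq_zero_or_pos #(unitPairs S) with h0 | hpos
  · omega
  · obtain ⟨i, hi, j, hj, hij⟩ := exists_unitPair_of_card_pos hpos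
    obtain ⟨θ, p, hρθ, h⟩ := hS.exists_isArcCoordinate hd hi hj hij
    have hcos : 0 ≤ cos θ := by
      by_contra!
      nlinarith
    have hθ : θ ≤ π / 2 := by
      by_contra!
      linarith [cos_neg_of_pi_div_two_lt_of_lt this (by linarith [h.le_pi, pi_pos])]
    exact (h.card_unitPairs_eq_one (by linarith [pi_pos])).le

lemma card_le_three (hi : i ∈ S) (hj : j ∈ S) (hk : k ∈ S) (hij : ‖i - j‖ = 1)
    (hik : ‖i - k‖ = 1) (hjk : ‖j - k‖ = 1) : #S ≤ 3 := by
  obtain ⟨θ, p, -, h⟩ := hS.exists_isArcCoordinate hd hi hj hij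
  exact (card_le_card (h.subset_insert_pair hk hik hjk)).trans Finset.card_le_three

end IsOnCircle

end PointsOnCircle

section ExtremalNumber

variable {a b m n : ℕ}

lemma F₃_two_mul (m : ℕ) : F₃ (2 * m) = m * (m + 1) := by
  rw [F₃, if_neg (by omega), if_neg (by omega)]
  rcases m with _ | m
  · rfl
  · rw [show 2 * (m + 1) - 2 = 2 * m by omega,
      show 2 * (m + 1) * (2 * m) = 4 * ((m + 1) * m) by ring,
      Nat.mul_div_cancel_left _ zero_lt_four]
    ring

lemma F₃_two_mul_add_one_of_even (hm : Even m) : F₃ (2 * m + 1) = (m + 1) * (m + 1) := by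
  obtain ⟨l, rfl⟩ := hm
  rw [F₃, if_pos (by omega), Nat.add_sub_cancel,
    show (2 * (l + l)) ^ 2 = 4 * ((l + l) * (l + l)) by ring,
    Nat.mul_div_cancel_left _ zero_lt_four]
  ring

lemma F₃_two_mul_add_one_of_odd (hm : Odd m) : F₃ (2 * m + 1) = m * (m + 2) := by
  rw [Nat.odd_iff] at hm
  rw [F₃, if_neg (by omega), if_pos (by omega), Nat.add_sub_cancel,
    show (2 * m) ^ 2 = 4 * (m * m) by ring, Nat.mul_div_cancel_left _ zero_lt_four]
  refine Nat.sub_eq_of_eq_add ?_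
  ring

lemma four_mul_F₃_bounds (n : ℕ) : 4 * F₃ n ≤ (n + 1) ^ 2 ∧ (n + 1) ^ 2 ≤ 4 * F₃ n + 4 := by
  obtain ⟨m, rfl | rfl⟩ := n.even_or_odd'
  · rw [F₃_two_mul]
    constructor <;> nlinarith
  · rcases m.even_or_odd with hm | hm
    · rw [F₃_two_mul_add_one_of_even hm]
      constructor <;> nlinarith
    · rw [F₃_two_mul_add_one_of_odd hm]
      constructor <;> nlinarith

lemma succ_mul_le_F₃ (a : ℕ) (hb : Odd b) : (a + 1) * b ≤ F₃ (a + b) := by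
  obtain ⟨m, hm | hm⟩ := (a + b).even_or_odd'
  · obtain ⟨t, ht⟩ : ∃ t : ℤ, b = m + t := ⟨b - m, by ring⟩
    rw [hm, F₃_two_mul]
    zify
    rw [show (a : ℤ) = m - t by omega, ht]
    nlinarith [Int.le_self_sq t]
  · obtain ⟨t, ht⟩ : ∃ t : ℤ, b = m + 1 + t := ⟨b - m - 1, by ring⟩
    rw [hm]
    rcases m.even_or_odd with hm' | hm'
    · rw [F₃_two_mul_add_one_of_even hm']
      zify
      rw [show (a : ℤ) = m - t by omega, ht]
      nlinarith [sq_nonneg t]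
    · have ht0 : t ≠ 0 := by
        obtain ⟨k, rfl⟩ := hm'
        obtain ⟨l, rfl⟩ := hb
        omega
      rw [F₃_two_mul_add_one_of_odd hm']
      zify
      rw [show (a : ℤ) = m - t by omega, ht]
      nlinarith [sq_pos_of_ne_zero ht0]

lemma exists_odd_F₃_eq (hn : 0 < n) :
    ∃ a b, a + b = n ∧ Odd b ∧ n ≤ 2 * a + 2 ∧ n ≤ 2 * b + 1 ∧ F₃ n = (a + 1) * b := by
  obtain ⟨m, rfl | rfl⟩ := n.even_or_odd'
  · rcases m.even_or_odd with hm | hm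
    · exact ⟨m - 1, m + 1, by omega, hm.add_one, by omega, by omega, by
        rw [F₃_two_mul, Nat.sub_add_cancel (by omega)]⟩
    · exact ⟨m, m, by omega, hm, by omega, by omega, by rw [F₃_two_mul, mul_comm]⟩
  · rcases m.even_or_odd with hm | hm
    · exact ⟨m, m + 1, by omega, hm.add_one, by omega, by omega, F₃_two_mul_add_one_of_even hm⟩
    · exact ⟨m + 1, m, by omega, hm, by omega, by omega, by
        rw [F₃_two_mul_add_one_of_odd hm, mul_comm]⟩

end ExtremalNumber

section LenzParts

variable {A B L Q S X : Finset ℝ⁴} {ρ σ : ℝ}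

lemma IsOnCircle.unitTriangles_eq_empty_or (hS : IsOnCircle S ρ) (hd : DiamLEOne S) :
    unitTriangles S = ∅ ∨ #S ≤ 3 ∧ #(unitTriangles S) ≤ 1 := by
  refine (unitTriangles S).eq_empty_or_nonempty.imp_right fun ⟨s, hs⟩ => ?_
  obtain ⟨x, hx, y, hy, z, hz, hxy, hxz, hyz, -⟩ := mem_unitTriangles.1 hs
  have hcard := hS.card_le_three hd hx hy hz hxy hxz hyz
  exact ⟨hcard, card_unitTriangles_le_choose.trans (Nat.choose_le_choose 3 hcard)⟩

lemma IsOnCircle.card_unitTriangles_union_le (hA : IsOnCircle A ρ) (hB : IsOnCircle B σ)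
    (hdA : DiamLEOne A) (hdB : DiamLEOne B) (hρ : 1 / 2 ≤ ρ) (hcardA : 3 ≤ #A) (hcardB : 3 ≤ #B)
    (hcard : 12 ≤ #A + #B) : #(unitTriangles (A ∪ B)) ≤ F₃ (#A + #B) := by
  have hT := card_unitTriangles_union_le_mul (A := A) (B := B)
  have heA := hA.card_unitPairs_le_one hdA hρ
  have heB := hB.card_unitPairs_le hdB
  have hmulA := Nat.mul_le_mul_left #B heA
  have hF := (four_mul_F₃_bounds (#A + #B)).2
  rcases hB.unitTriangles_eq_empty_or hdB with hTB | ⟨hB3, hTB⟩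
  · rcases hA.unitTriangles_eq_empty_or hdA with hTA | ⟨hA3, hTA⟩
    · rw [hTA, hTB, card_empty] at hT
      rcases heB.lt_or_eq with hlt | heq
      · have hmulB := Nat.mul_le_mul_left #A (Nat.le_sub_one_of_lt hlt)
        zify [(by omega : 1 ≤ #B)] at *
        nlinarith [sq_nonneg ((#A : ℤ) + 1 - #B)]
      · have hodd := hB.odd_card_of_card_unitPairs_eq hdB (card_pos.1 (by omega)) heq
        have := succ_mul_le_F₃ #A hodd
        rw [heq] at hT
        linarith
    · have hA3 : #A = 3 := hA3.antisymm hcardA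
      rw [hTB, hA3, card_empty] at hT
      rw [hA3] at hF hcard ⊢
      nlinarith
  · have hB3 : #B = 3 := hB3.antisymm hcardB
    have hTA : unitTriangles A = ∅ :=
      (hA.unitTriangles_eq_empty_or hdA).resolve_right (by omega)
    have hmulB := Nat.mul_le_mul_left #A heB
    rw [hTA, card_empty] at hT
    rw [hB3] at hF hcard hT hmulA hmulB ⊢
    nlinarith

lemma card_unitTriangles_union_le_F₃ (hAB : ∀ a ∈ A, ∀ b ∈ B, ‖a - b‖ = 1) (hdA : DiamLEOne A)
    (hdB : DiamLEOne B) (hcardA : 3 ≤ #A) (hcardB : 3 ≤ #B) (hcard : 12 ≤ #A + #B) :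
    #(unitTriangles (A ∪ B)) ≤ F₃ (#A + #B) := by
  obtain ⟨ρ, σ, hρσ, hA, hB⟩ :=
    exists_isOnCircle_of_norm_sub_eq_one finrank_euclideanSpace_fin hAB hcardA hcardB
  rcases le_total σ ρ with h | h
  · exact hA.card_unitTriangles_union_le hB hdA hdB (by linarith) hcardA hcardB hcard
  · rw [union_comm, add_comm]
    exact hB.card_unitTriangles_union_le hA hdB hdA (by linarith) hcardB hcardA (by omega)

/-- The points of `X` at distance `1` from every point of `Q`. -/
noncomputable def commonUnitNeighbors (X Q : Finset ℝ⁴) : Finset ℝ⁴ :=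
  {x ∈ X | ∀ q ∈ Q, ‖x - q‖ = 1}

lemma mem_commonUnitNeighbors {x : ℝ⁴} :
    x ∈ commonUnitNeighbors X Q ↔ x ∈ X ∧ ∀ q ∈ Q, ‖x - q‖ = 1 := mem_filter

lemma IsOnCircle.card_unitNeighbors_le_two (hS : IsOnCircle S ρ) {x : ℝ⁴} (hx : x ∈ X)
    (hxS : x ∉ commonUnitNeighbors X S) : #(unitNeighbors S x) ≤ 2 := by
  by_contra! h
  have := hS.norm_sub_eq_one unitNeighbors_subset h fun y hy => (mem_unitNeighbors.1 hy).2
  exact hxS (mem_commonUnitNeighbors.2 ⟨hx, fun y hy => by rw [norm_sub_rev, this y hy]⟩)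

/-- A Lenz part `L` of `X` satisfies the extremal bound and has few unit distances to the rest of
`X`. -/
structure IsLenzPart (X L : Finset ℝ⁴) : Prop where
  subset : L ⊆ X
  card_unitTriangles_le : #(unitTriangles L) ≤ F₃ #L
  card_unitNeighbors_le : ∀ x ∈ X \ L, #(unitNeighbors L x) ≤ 4

lemma exists_isLenzPart (hd : DiamLEOne X) (hQX : Q ⊆ X) (hQ : 2 < #Q)
    (hcard : 9 ≤ #(commonUnitNeighbors X Q)) :
    ∃ L, IsLenzPart X L ∧ #(commonUnitNeighbors X Q) < #L := by
  let A := commonUnitNeighbors X Q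
  let B := commonUnitNeighbors X A
  have hcardA : 9 ≤ #A := hcard
  have hAX : A ⊆ X := filter_subset _ _
  have hBX : B ⊆ X := filter_subset _ _
  have hQB : Q ⊆ B := fun q hq => mem_commonUnitNeighbors.2 ⟨hQX hq, fun a ha => by
    rw [norm_sub_rev, (mem_commonUnitNeighbors.1 ha).2 q hq]⟩
  have hAB : ∀ a ∈ A, ∀ b ∈ B, ‖a - b‖ = 1 := fun a ha b hb => by
    rw [norm_sub_rev, (mem_commonUnitNeighbors.1 hb).2 a ha]
  have hcardB : 2 < #B := hQ.trans_le (card_le_card hQB)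
  have hdisj : Disjoint A B :=
    disjoint_left.2 fun x hA hB => ne_of_norm_sub_eq_one (hAB x hA x hB) rfl
  obtain ⟨ρ, σ, -, hA, hB⟩ := exists_isOnCircle_of_norm_sub_eq_one
    finrank_euclideanSpace_fin hAB (by omega) hcardB
  refine ⟨A ∪ B, ⟨union_subset hAX hBX, ?_, fun x hx => ?_⟩, ?_⟩
  · rw [card_union_of_disjoint hdisj]
    exact card_unitTriangles_union_le_F₃ hAB (hd.mono hAX) (hd.mono hBX) (by omega) hcardB
      (by omega)
  · obtain ⟨hxX, hx⟩ := mem_sdiff.1 hx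
    have hxA : #(unitNeighbors A x) ≤ 2 :=
      hA.card_unitNeighbors_le_two hxX fun hxB => hx (mem_union_right _ hxB)
    have hxB : #(unitNeighbors B x) ≤ 2 :=
      hB.card_unitNeighbors_le_two hxX fun hxA => hx (mem_union_left _
        (mem_commonUnitNeighbors.2 ⟨hxX, fun q hq =>
          (mem_commonUnitNeighbors.1 hxA).2 q (hQB hq)⟩))
    rw [unitNeighbors, filter_union]
    exact (card_union_le _ _).trans (add_le_add hxA hxB)
  · rw [card_union_of_disjoint hdisj]
    exact Nat.lt_add_of_pos_right (by omega)

end LenzParts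

section UpperBound

variable {L R X : Finset ℝ⁴} {s : ℕ}

lemma sum_card_unitPairs_unitNeighbors_le (hd : DiamLEOne X) (A : Finset ℝ⁴) :
    ∑ a ∈ A, #(unitPairs (unitNeighbors X a)) ≤ 7 * ∑ a ∈ A, #(unitNeighbors X a) := by
  rw [mul_sum]
  exact sum_le_sum fun a _ => card_unitPairs_le_of_norm_sub_eq_one
    (fun p hp => (mem_unitNeighbors.1 hp).2) (hd.mono unitNeighbors_subset)

lemma sum_card_unitNeighbors_pow_three_le
    (h : ∀ Q ⊆ X, 2 < #Q → #(commonUnitNeighbors X Q) ≤ s) :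
    (∑ x ∈ X, #(unitNeighbors X x)) ^ 3 ≤ (s + 3) * #X ^ 5 := by
  have hcommon : ∀ q₁ ∈ X, ∀ q₂ ∈ X, ∀ q₃ ∈ X, q₁ ≠ q₂ → q₁ ≠ q₃ → q₂ ≠ q₃ →
      #{x ∈ X | ‖q₁ - x‖ = 1 ∧ ‖q₂ - x‖ = 1 ∧ ‖q₃ - x‖ = 1} ≤ s := by
    intro q₁ h₁ q₂ h₂ q₃ h₃ h₁₂ h₁₃ h₂₃
    have hcard : #{q₁, q₂, q₃} = 3 := card_eq_three.2 ⟨q₁, q₂, q₃, h₁₂, h₁₃, h₂₃, rfl⟩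
    have := h {q₁, q₂, q₃} (by simp [insert_subset_iff, h₁, h₂, h₃]) (by omega)
    simpa [commonUnitNeighbors, norm_sub_rev] using this
  exact (sum_card_bipartiteAbove_pow_three_le hcommon).trans_eq (by ring)

/-- If no three points of `X` have more than `s` common neighbors, the Kővári–Sós–Turán bound on
the number of unit distances and the linear bound on each link give at most `#X ^ 2 / 4`
triangles. -/
lemma four_mul_card_unitTriangles_le_or_exists_isLenzPart (hd : DiamLEOne X) (hs : 8 ≤ s)
    (hn : 28 ^ 3 * (s + 3) ≤ #X) :
    4 * #(unitTriangles X) ≤ #X ^ 2 ∨ ∃ L, IsLenzPart X L ∧ s < #L := by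
  by_cases! h : ∀ Q ⊆ X, 2 < #Q → #(commonUnitNeighbors X Q) ≤ s
  · left
    have hT := card_unitTriangles_le_sum.trans (sum_card_unitPairs_unitNeighbors_le hd X)
    by_contra! hlt
    have hpow : (#X ^ 2) ^ 3 < (28 * ∑ x ∈ X, #(unitNeighbors X x)) ^ 3 :=
      Nat.pow_lt_pow_left (by omega) three_ne_zero
    refine hpow.not_ge ?_
    calc (28 * ∑ x ∈ X, #(unitNeighbors X x)) ^ 3
        ≤ 28 ^ 3 * ((s + 3) * #X ^ 5) := by
          rw [mul_pow]
          exact Nat.mul_le_mul_left _ (sum_card_unitNeighbors_pow_three_le h)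
      _ = 28 ^ 3 * (s + 3) * #X ^ 5 := (mul_assoc _ _ _).symm
      _ ≤ #X * #X ^ 5 := Nat.mul_le_mul_right _ hn
      _ = (#X ^ 2) ^ 3 := by ring
  · right
    obtain ⟨Q, hQX, hQ, hlt⟩ := h
    obtain ⟨L, hL, hcard⟩ := exists_isLenzPart hd hQX hQ (by omega)
    exact ⟨L, hL, hlt.trans hcard⟩

lemma IsLenzPart.card_unitTriangles_le_add (hL : IsLenzPart X L) (hd : DiamLEOne X) :
    #(unitTriangles X) ≤ F₃ #L + #(unitTriangles (X \ L)) + 34 * #(X \ L) := by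
  have hdR : DiamLEOne (X \ L) := hd.mono sdiff_subset
  have hpairsL : ∑ x ∈ X \ L, #(unitPairs (unitNeighbors L x)) ≤ #(X \ L) * 6 :=
    sum_le_card_nsmul _ _ _ fun x hx =>
      card_unitPairs_le_choose.trans (Nat.choose_le_choose 2 (hL.card_unitNeighbors_le x hx))
  have hpairsR := sum_card_unitPairs_unitNeighbors_le hdR L
  have hcross : ∑ x ∈ X \ L, #(unitNeighbors L x) ≤ #(X \ L) * 4 :=
    sum_le_card_nsmul _ _ _ hL.card_unitNeighbors_le
  rw [sum_card_unitNeighbors_comm] at hpairsR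
  have hunion := card_unitTriangles_union_le (A := L) (B := X \ L)
  rw [union_sdiff_of_subset hL.subset] at hunion
  linarith [hL.card_unitTriangles_le]

lemma exists_four_mul_card_unitTriangles_le :
    ∃ C, ∀ X : Finset ℝ⁴, DiamLEOne X → 4 * #(unitTriangles X) ≤ #X ^ 2 + C * #X := by
  let K := 28 ^ 3 * (100 + 3)
  refine ⟨4 * K ^ 2 + 3, fun X => ?_⟩
  induction X using Finset.strongInduction with
  | H X ih =>
    intro hd
    rcases lt_or_ge #X K with hlt | hge
    · have htriv := card_unitTriangles_le_choose.trans (Nat.choose_le_pow #X 3)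
      nlinarith [Nat.mul_le_mul_right #X (Nat.pow_le_pow_left hlt.le 2)]
    · rcases four_mul_card_unitTriangles_le_or_exists_isLenzPart hd (by norm_num) hge with
        h | ⟨L, hL, hcard⟩
      · exact h.trans le_self_add
      · have hne : L.Nonempty := card_pos.1 (by omega)
        have hrest := ih (X \ L) (sdiff_ssubset hL.subset hne) (hd.mono sdiff_subset)
        have hunion := hL.card_unitTriangles_le_add hd
        have hF := (four_mul_F₃_bounds #L).1
        have hmul := Nat.mul_le_mul_right #(X \ L) hcard.le
        rw [← card_sdiff_add_card_eq_card hL.subset]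
        nlinarith

lemma exists_card_unitTriangles_le_F₃ :
    ∃ N, ∀ X : Finset ℝ⁴, N ≤ #X → DiamLEOne X → #(unitTriangles X) ≤ F₃ #X := by
  obtain ⟨C, hC⟩ := exists_four_mul_card_unitTriangles_le
  refine ⟨28 ^ 3 * ((C + 140) + 3), fun X hX hd => ?_⟩
  have hF := (four_mul_F₃_bounds #X).2
  rcases four_mul_card_unitTriangles_le_or_exists_isLenzPart hd (by omega) hX with
    h | ⟨L, hL, hcard⟩
  · nlinarith
  · rcases (X \ L).eq_empty_or_nonempty with hR | hR
    · obtain rfl := hL.subset.antisymm (sdiff_eq_empty_iff_subset.1 hR)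
      exact hL.card_unitTriangles_le
    · have hrest := hC (X \ L) (hd.mono sdiff_subset)
      have hunion := hL.card_unitTriangles_le_add hd
      have hFL := (four_mul_F₃_bounds #L).1
      have hmul := Nat.mul_le_mul_right #(X \ L) hcard.le
      have hpos := hR.card_pos
      rw [← card_sdiff_add_card_eq_card hL.subset] at hF ⊢
      nlinarith

end UpperBound

section Construction

open Real

variable {E : Type*} [NormedAddCommGroup E] {P : ℝ → E} {ρ σ : ℝ}

lemma eq_iff_cos_sub_eq_one (hρ : ρ ≠ 0)
    (hP : ∀ t u, ‖P t - P u‖ ^ 2 = 2 * ρ * (1 - cos (t - u))) {t u : ℝ} :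
    P t = P u ↔ cos (t - u) = 1 := by
  rw [← sub_eq_zero, ← norm_eq_zero, ← sq_eq_zero_iff, hP]
  simp [hρ, sub_eq_zero (a := (1 : ℝ)), eq_comm (a := (1 : ℝ))]

lemma diamLEOne_image_of_cos_le {s : Finset ℝ} {θ : ℝ} (hρ : 0 ≤ ρ)
    (hP : ∀ t u, ‖P t - P u‖ ^ 2 = 2 * ρ * (1 - cos (t - u)))
    (hθ : 2 * ρ * (1 - cos θ) = 1) (hs : ∀ t ∈ s, ∀ u ∈ s, cos θ ≤ cos (t - u)) :
    DiamLEOne (s.image P) := by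
  intro x hx y hy
  obtain ⟨t, ht, rfl⟩ := mem_image.1 hx
  obtain ⟨u, hu, rfl⟩ := mem_image.1 hy
  rw [← sq_le_one_iff₀ (norm_nonneg _), hP]
  refine (mul_le_mul_of_nonneg_left ?_ (by positivity)).trans_eq hθ
  exact sub_le_sub_left (hs t ht u hu) 1

lemma norm_sub_eq_one_of_cos_eq {θ t u : ℝ}
    (hP : ∀ t u, ‖P t - P u‖ ^ 2 = 2 * ρ * (1 - cos (t - u)))
    (hθ : 2 * ρ * (1 - cos θ) = 1) (h : cos (t - u) = cos θ) : ‖P t - P u‖ = 1 := by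
  rw [← pow_eq_one_iff_of_nonneg (norm_nonneg _) two_ne_zero, hP, h, hθ]

lemma exists_finset_range_card_unitPairs_pos {a : ℕ} (hρ : 1 / 4 ≤ ρ)
    (hP : ∀ t u, ‖P t - P u‖ ^ 2 = 2 * ρ * (1 - cos (t - u))) (ha : 2 ≤ a) :
    ∃ A : Finset E, #A = a ∧ ↑A ⊆ Set.range P ∧ DiamLEOne A ∧ 0 < #(unitPairs A) := by
  set θ := arccos (1 - 1 / (2 * ρ)) with hθ
  have hρ₀ : 0 < 2 * ρ := by linarith
  have hle : 1 / (2 * ρ) ≤ 2 := by rw [div_le_iff₀ hρ₀]; linarith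
  have hpos : 0 < 1 / (2 * ρ) := by positivity
  have hθ₀ : 0 < θ := arccos_pos.2 (by linarith)
  have hθπ : θ ≤ π := arccos_le_pi _
  have hunit : 2 * ρ * (1 - cos θ) = 1 := by
    rw [hθ, cos_arccos (by linarith) (by linarith), sub_sub_cancel, mul_one_div_cancel hρ₀.ne']
  obtain ⟨s, hs, hsθ, hcard⟩ := (Set.Icc_infinite hθ₀).exists_superset_ncard_eq (s := {0, θ})
    (by simp [Set.insert_subset_iff, hθ₀.le]) (by simp)
    (k := a) (by rwa [Set.ncard_pair hθ₀.ne])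
  have hfin : s.Finite := Set.finite_of_ncard_pos (by omega)
  lift s to Finset ℝ using hfin
  rw [Set.ncard_coe_finset] at hcard
  have hdist : ∀ t ∈ s, ∀ u ∈ s, |t - u| ≤ θ := fun t ht u hu =>
    (abs_sub_le_of_le_of_le (hsθ ht).1 (hsθ ht).2 (hsθ hu).1 (hsθ hu).2).trans_eq (sub_zero θ)
  have hends : 0 ∈ s ∧ θ ∈ s := by simpa [Set.insert_subset_iff] using hs
  refine ⟨s.image P, ?_, by simp, diamLEOne_image_of_cos_le (by linarith) hP hunit ?_, ?_⟩
  · rw [card_image_of_injOn, hcard]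
    intro t ht u hu h
    have hlt := abs_lt.1 ((hdist t ht u hu).trans_lt (by linarith : θ < 2 * π))
    rw [eq_iff_cos_sub_eq_one (by linarith) hP, cos_eq_one_iff_of_lt_of_lt hlt.1 hlt.2] at h
    exact sub_eq_zero.1 h
  · intro t ht u hu
    rw [← cos_abs (t - u)]
    exact cos_le_cos_of_nonneg_of_le_pi (abs_nonneg _) hθπ (hdist t ht u hu)
  · exact card_pos.2 ⟨_, pair_mem_unitPairs
      (mem_image_of_mem P hends.1) (mem_image_of_mem P hends.2)
      (norm_sub_eq_one_of_cos_eq hP hunit (by rw [zero_sub, cos_neg]))⟩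

lemma le_card_unitPairs_image_range {b m : ℕ} {B : ℕ → E}
    (hB : ∀ i j, B i = B j ↔ (i : ZMod b) = j) (hstep : ∀ i, ‖B (i + m) - B i‖ = 1)
    (hm : ¬ b ∣ 2 * m) : b ≤ #(unitPairs ((range b).image B)) := by
  rcases b.eq_zero_or_pos with rfl | hb
  · exact Nat.zero_le _
  have hmem (i : ℕ) : B i ∈ (range b).image B := by
    rw [(hB i (i % b)).2 (ZMod.natCast_mod i b).symm]
    exact mem_image_of_mem _ (mem_range.2 (i.mod_lt hb))
  refine (card_range b).ge.trans (card_le_card_of_injOn (fun i => {B (i + m), B i})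
    (fun i _ => pair_mem_unitPairs (hmem _) (hmem _) (hstep i)) fun i hi j hj h => ?_)
  have hij : (i : ZMod b) = j := by
    dsimp only at h
    have hi : B i ∈ ({B (j + m), B j} : Finset E) := h ▸ by simp
    have hj : B j ∈ ({B (i + m), B i} : Finset E) := h.symm ▸ by simp
    simp only [mem_insert, mem_singleton, hB, Nat.cast_add] at hi hj
    rcases hi with hi | hi
    · rcases hj with hj | hj
      · refine absurd ((ZMod.natCast_eq_zero_iff _ _).1 ?_) hm
        push_cast
        linear_combination -hi - hj
      · exact hj.symm
    · exact hi
  rw [ZMod.natCast_eq_natCast_iff] at hij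
  exact hij.eq_of_lt_of_lt (mem_range.1 hi) (mem_range.1 hj)

lemma cos_le_cos_intCast_mul (m : ℕ) (k : ℤ) :
    cos (m * (2 * π / (2 * m + 1))) ≤ cos (k * (2 * π / (2 * m + 1))) := by
  obtain ⟨q, hq⟩ : ((2 * m + 1 : ℕ) : ℤ) ∣ k - k.bmod (2 * m + 1) := Int.dvd_self_sub_bmod
  set r := k.bmod (2 * m + 1)
  have hrm : |(r : ℝ)| ≤ m := by
    have hlow := Int.le_bmod (x := k) (m := 2 * m + 1) (by omega)
    have hupp := Int.bmod_lt (x := k) (m := 2 * m + 1) (by omega)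
    exact_mod_cast (abs_le.2 ⟨by omega, by omega⟩ : |r| ≤ m)
  have hδ : 0 ≤ 2 * π / (2 * m + 1) := by positivity
  have hk : cos (k * (2 * π / (2 * m + 1))) = cos (r * (2 * π / (2 * m + 1))) := by
    have hk : (k : ℝ) = r + (2 * m + 1) * q := by
      have : k = r + (2 * m + 1) * q := by push_cast at hq; linarith
      exact_mod_cast this
    rw [← cos_add_int_mul_two_pi (r * (2 * π / (2 * m + 1))) q, hk]
    congr 1
    field_simp
  rw [hk, ← cos_abs (r * _), abs_mul, abs_of_nonneg hδ]
  refine cos_le_cos_of_nonneg_of_le_pi (by positivity) ?_ (by gcongr)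
  rw [mul_div_assoc', div_le_iff₀ (by positivity)]
  linarith [pi_pos]

lemma eq_regularPolygon_iff (hσ : σ ≠ 0)
    (hP : ∀ t u, ‖P t - P u‖ ^ 2 = 2 * σ * (1 - cos (t - u))) (m i j : ℕ) :
    P (i * (2 * π / (2 * m + 1))) = P (j * (2 * π / (2 * m + 1))) ↔
      (i : ZMod (2 * m + 1)) = j := by
  have hmod : (i : ZMod (2 * m + 1)) = j ↔ ((2 * m + 1 : ℕ) : ℤ) ∣ i - j := by
    rw [eq_comm]
    exact_mod_cast ZMod.intCast_eq_intCast_iff_dvd_sub j i (2 * m + 1)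
  rw [eq_iff_cos_sub_eq_one hσ hP, ← sub_mul, cos_eq_one_iff, hmod]
  refine exists_congr fun q => ?_
  rw [← @Int.cast_inj ℝ]
  push_cast
  rw [mul_div_assoc', eq_div_iff (by positivity), mul_right_comm,
    mul_left_inj' (by positivity), mul_comm, eq_comm]

/-- The vertices of a regular polygon with `2 * m + 1` sides, whose longest diagonals, spanning `m`
sides, are the unit distances. -/
lemma exists_finset_range_le_card_unitPairs {m : ℕ} (hm : 0 < m)
    (hP : ∀ t u, ‖P t - P u‖ ^ 2 = 2 * σ * (1 - cos (t - u)))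
    (hσ : 2 * σ * (1 - cos (m * (2 * π / (2 * m + 1)))) = 1) :
    ∃ B : Finset E, #B = 2 * m + 1 ∧ ↑B ⊆ Set.range P ∧ DiamLEOne B ∧
      2 * m + 1 ≤ #(unitPairs B) := by
  set δ := 2 * π / (2 * m + 1)
  have hσ₀ : 0 < σ := by
    by_contra! h
    nlinarith [cos_le_one (m * δ)]
  have hinj := eq_regularPolygon_iff hσ₀.ne' hP m
  have himage : ((range (2 * m + 1)).image fun i : ℕ => i * δ).image P =
      (range (2 * m + 1)).image fun i : ℕ => P (i * δ) := image_image
  refine ⟨(range (2 * m + 1)).image fun i : ℕ => P (i * δ), ?_, ?_, ?_, ?_⟩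
  · rw [card_image_of_injOn, card_range]
    intro i hi j hj h
    exact ((ZMod.natCast_eq_natCast_iff _ _ _).1 ((hinj i j).1 h)).eq_of_lt_of_lt
      (mem_range.1 hi) (mem_range.1 hj)
  · simp [← himage]
  · rw [← himage]
    refine diamLEOne_image_of_cos_le hσ₀.le hP hσ fun t ht u hu => ?_
    obtain ⟨i, -, rfl⟩ := mem_image.1 ht
    obtain ⟨j, -, rfl⟩ := mem_image.1 hu
    simpa [sub_mul] using cos_le_cos_intCast_mul m (i - j)
  · refine le_card_unitPairs_image_range (m := m) hinj (fun i => norm_sub_eq_one_of_cos_eq hP hσ ?_)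
      (Nat.not_dvd_of_pos_of_lt (by omega) (by omega))
    rw [← sub_mul, Nat.cast_add, add_sub_cancel_left]

lemma exists_orthogonal_circles (hρ : 0 ≤ ρ) (hσ : 0 ≤ σ) (h : ρ + σ = 1) :
    ∃ P Q : ℝ → ℝ⁴, (∀ t u, ‖P t - P u‖ ^ 2 = 2 * ρ * (1 - cos (t - u))) ∧
      (∀ t u, ‖Q t - Q u‖ ^ 2 = 2 * σ * (1 - cos (t - u))) ∧ ∀ t u, ‖P t - Q u‖ = 1 := by
  obtain ⟨r, rfl⟩ : ∃ r, r ^ 2 = ρ := ⟨√ρ, sq_sqrt hρ⟩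
  obtain ⟨s, rfl⟩ : ∃ s, s ^ 2 = σ := ⟨√σ, sq_sqrt hσ⟩
  refine ⟨fun t => !₂[r * cos t, r * sin t, 0, 0], fun t => !₂[0, 0, s * cos t, s * sin t],
    fun t u => ?_, fun t u => ?_, fun t u => ?_⟩
  · simp only [EuclideanSpace.real_norm_sq_eq, PiLp.sub_apply, Fin.sum_univ_four, Matrix.cons_val,
      cos_sub]
    linear_combination r ^ 2 * sin_sq_add_cos_sq t + r ^ 2 * sin_sq_add_cos_sq u
  · simp only [EuclideanSpace.real_norm_sq_eq, PiLp.sub_apply, Fin.sum_univ_four, Matrix.cons_val,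
      cos_sub]
    linear_combination s ^ 2 * sin_sq_add_cos_sq t + s ^ 2 * sin_sq_add_cos_sq u
  · rw [← pow_eq_one_iff_of_nonneg (norm_nonneg _) two_ne_zero]
    simp only [EuclideanSpace.real_norm_sq_eq, PiLp.sub_apply, Fin.sum_univ_four, Matrix.cons_val]
    linear_combination r ^ 2 * sin_sq_add_cos_sq t + s ^ 2 * sin_sq_add_cos_sq u + h

lemma exists_le_card_unitTriangles {a b : ℕ} (ha : 2 ≤ a) (hb : Odd b) (hb₃ : 3 ≤ b) :
    ∃ X : Finset ℝ⁴, #X = a + b ∧ DiamLEOne X ∧ (a + 1) * b ≤ #(unitTriangles X) := by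
  obtain ⟨m, rfl⟩ := hb
  have hm : 0 < m := by omega
  set c := cos (m * (2 * π / (2 * m + 1))) with hc
  have hc₀ : c ≤ 0 := by
    have hm₁ : (1 : ℝ) ≤ m := by exact_mod_cast hm
    refine cos_nonpos_of_pi_div_two_le_of_le ?_ ?_ <;>
      [rw [mul_div_assoc', le_div_iff₀ (by positivity)];
        rw [mul_div_assoc', div_le_iff₀ (by positivity)]] <;>
      nlinarith [pi_pos]
  have hσ : 1 / (2 * (1 - c)) ≤ 1 / 2 := by
    gcongr
    linarith
  obtain ⟨P, Q, hP, hQ, hPQ⟩ := exists_orthogonal_circles (sub_nonneg.2 (hσ.trans (by norm_num)))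
    (one_div_nonneg.2 (by linarith)) (sub_add_cancel 1 (1 / (2 * (1 - c))))
  obtain ⟨A, hA, hAP, hdA, heA⟩ :=
    exists_finset_range_card_unitPairs_pos (by linarith) hP ha
  obtain ⟨B, hB, hBQ, hdB, heB⟩ := exists_finset_range_le_card_unitPairs hm hQ (by
    rw [← hc]
    field_simp [show 1 - c ≠ 0 by linarith])
  have hAB : ∀ x ∈ A, ∀ y ∈ B, ‖x - y‖ = 1 := by
    intro x hx y hy
    obtain ⟨t, rfl⟩ := hAP hx
    obtain ⟨u, rfl⟩ := hBQ hy
    exact hPQ t u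
  have hdisj : Disjoint A B :=
    disjoint_left.2 fun x hA hB => ne_of_norm_sub_eq_one (hAB x hA x hB) rfl
  refine ⟨A ∪ B, by rw [card_union_of_disjoint hdisj, hA, hB], ?_, ?_⟩
  · intro x hx y hy
    rcases mem_union.1 hx with hx | hx <;> rcases mem_union.1 hy with hy | hy
    · exact hdA x hx y hy
    · exact (hAB x hx y hy).le
    · exact norm_sub_rev x y ▸ (hAB y hy x hx).le
    · exact hdB x hx y hy
  · refine le_trans ?_ (le_card_unitTriangles_union hAB)
    rw [hA, hB, add_mul, one_mul]
    exact add_le_add (Nat.mul_le_mul_left _ heB) (Nat.le_mul_of_pos_right _ heA)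

end Construction

theorem max_triangles_diameter_graph_R4 :
    ∃ N : ℕ, ∀ n : ℕ, n ≥ N →
      (∀ X : Finset (EuclideanSpace ℝ (Fin 4)), X.card = n →
        (∀ x ∈ X, ∀ y ∈ X, ‖x - y‖ ≤ 1) → (unitTriangles X).card ≤ F₃ n) ∧
      (∃ X : Finset (EuclideanSpace ℝ (Fin 4)), X.card = n ∧
        (∀ x ∈ X, ∀ y ∈ X, ‖x - y‖ ≤ 1) ∧ (unitTriangles X).card = F₃ n) := by
  obtain ⟨N, hupper⟩ := exists_card_unitTriangles_le_F₃
  refine ⟨max N 6, fun n hn => ?_⟩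
  obtain ⟨hN, hn₆⟩ := max_le_iff.1 hn
  constructor
  · rintro X rfl hd
    exact hupper X hN hd
  · obtain ⟨a, b, rfl, hb, ha, hb₃, hF⟩ := exists_odd_F₃_eq (n := n) (by omega)
    obtain ⟨X, hX, hd, hlower⟩ :=
      exists_le_card_unitTriangles (a := a) (b := b) (by omega) hb (by omega)
    exact ⟨X, hX, hd, le_antisymm (hX ▸ hupper X (by omega) hd) (hF ▸ hlower)⟩
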